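/- arXiv:1812.07491 — 11 statements merged into one kernel-verified Lean document; each statement's English description precedes it below -/
import Mathlib

section
/- Let d ≥ 1 and let S = {s_1 < s_2 < ⋯ < s_k} ⊆ {0,1,…,d}. Let A, B ⊆ [d] with |A| = s_i ≤ s_j = |B| and A ≠ B. Then the segment [e_A, e_B] is an edge of Δ(d,S) if and only if either (i) A ⊂ B and j = i+1, or (ii) i = j, |A △ B| = 2, and {s_i − 1, s_i + 1} ⊄ S. -/
/-!
The segment `[e_A, e_B]` is extreme iff it is a face, and both directions are handled at the level
of vertices.

If (i) or (ii) holds, a linear functional exposes the segment: it has weight `2` on `A ∩ B`, `-2`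
outside `A ∪ B`, and a constant weight `ε ∈ {-1, 0, 1}` on `A △ B`. For (i) take `ε = 0`: the
maximisers are the sets between `A` and `B`, and only `A` and `B` have an admissible cardinality.
For (ii), `ε = 1` singles out `A`, `B` when `|A| + 1 ∉ S`, and `ε = -1` does so when
`|A| - 1 ∉ S`. That maximising on vertices is enough is `isExtreme_segment_of_functional`.

Conversely, an edge contains no vertex other than its endpoints (`eq_or_eq_of_mem_segment`), so it
suffices to write a point of the segment as a convex combination of other vertices.
* If neither of `A`, `B` contains the other, exchange `a ∈ A \ B` with `b ∈ B \ A`: the new pair has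
  the same midpoint. This is a contradiction unless `|A| = |B|` and `|A △ B| = 2`.
* In that case, `A ∩ B` and `A ∪ B` have the same midpoint as `A` and `B`, so they cannot both be
  vertices.
* If `A ⊂ B` and `s ∈ S` lies strictly between, the average of all `e_C` with `A ⊆ C ⊆ B` and
  `|C| = s` is constant on `B \ A`, hence lies on the segment (`not_isExtreme_of_between`).
-/

open Set Pointwise

noncomputable section

/-- The 0/1 indicator vector of a subset `A ⊆ [d]`. -/
def eVec (d : ℕ) (A : Finset (Fin d)) : Fin d → ℝ := fun i => if i ∈ A then 1 else 0

/-- The `S`-hypersimplex `Δ(d,S)`: the convex hull of all 0/1-vectors whose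
coordinate sum lies in `S`. -/
def Shyp (d : ℕ) (S : Finset ℕ) : Set (Fin d → ℝ) :=
  convexHull ℝ {x | ∃ A : Finset (Fin d), A.card ∈ S ∧ x = eVec d A}

/-- The face of `P` in direction `c`. -/
def faceDir (d : ℕ) (P : Set (Fin d → ℝ)) (c : Fin d → ℝ) : Set (Fin d → ℝ) :=
  {x ∈ P | ∀ y ∈ P, ∑ i, c i * y i ≤ ∑ i, c i * x i}

/-- The even halfcube `H_d`. -/
def halfcube (d : ℕ) : Set (Fin d → ℝ) :=
  Shyp d ((Finset.range (d + 1)).filter (fun s => Even s))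

/-- The permutahedron `Π(p)`. -/
def permPoly (d : ℕ) (p : Fin d → ℝ) : Set (Fin d → ℝ) :=
  convexHull ℝ {x | ∃ σ : Equiv.Perm (Fin d), x = fun i => p (σ i)}

lemma eVec_injective (d : ℕ) : Function.Injective (eVec d) := by
  intro A B h
  ext i
  have hi := congrFun h i
  by_cases h1 : i ∈ A <;> by_cases h2 : i ∈ B <;> simp_all [eVec]

lemma eVec_mem_Shyp {d : ℕ} {S : Finset ℕ} {A : Finset (Fin d)} (hA : A.card ∈ S) :
    eVec d A ∈ Shyp d S :=
  subset_convexHull ℝ _ ⟨A, hA, rfl⟩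

lemma eq_or_eq_of_mem_segment {d : ℕ} {A B C : Finset (Fin d)}
    (h : eVec d C ∈ segment ℝ (eVec d A) (eVec d B)) : C = A ∨ C = B := by
  obtain ⟨a, b, ha, hb, hab, h⟩ := h
  rcases ha.eq_or_lt with rfl | ha
  · right
    apply eVec_injective d
    rw [← h, show b = 1 by linarith]
    simp
  rcases hb.eq_or_lt with rfl | hb
  · left
    apply eVec_injective d
    rw [← h, show a = 1 by linarith]
    simp
  left
  ext i
  have hi := congrFun h i
  simp only [eVec, Pi.add_apply, Pi.smul_apply, smul_eq_mul] at hi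
  by_cases h1 : i ∈ A <;> by_cases h2 : i ∈ B <;> by_cases h3 : i ∈ C <;>
    simp only [h1, h2, h3, if_true, if_false] at hi ⊢ <;> linarith

/-- A segment is extreme in the convex hull of `V` as soon as some linear functional attains its
maximum over `V` at both endpoints and at no other point of `V`. -/
lemma isExtreme_segment_of_functional {E : Type*} [AddCommGroup E] [Module ℝ E] {V : Set E}
    {u v : E} (hu : u ∈ V) (hv : v ∈ V) (l : E →ₗ[ℝ] ℝ) (M : ℝ) (hlu : l u = M) (hlv : l v = M)
    (hle : ∀ x ∈ V, l x ≤ M) (heq : ∀ x ∈ V, l x = M → x = u ∨ x = v) :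
    IsExtreme ℝ (convexHull ℝ V) (segment ℝ u v) := by
  have key : convexHull ℝ V ⊆ {x | l x ≤ M ∧ (l x = M → x ∈ segment ℝ u v)} := by
    apply convexHull_min
    · intro x hx
      refine ⟨hle x hx, fun h => ?_⟩
      rcases heq x hx h with rfl | rfl
      · exact left_mem_segment ℝ _ _
      · exact right_mem_segment ℝ _ _
    · rw [convex_iff_forall_pos]
      rintro x ⟨hx, hx'⟩ y ⟨hy, hy'⟩ a b ha hb hab
      have hM : M = a * M + b * M := by rw [← add_mul, hab, one_mul]
      have h1 := mul_le_mul_of_nonneg_left hx ha.le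
      have h2 := mul_le_mul_of_nonneg_left hy hb.le
      simp only [mem_ofPred_eq, map_add, map_smul, smul_eq_mul]
      refine ⟨by linarith, fun h => ?_⟩
      have hx1 : l x = M := mul_left_cancel₀ ha.ne' (by linarith)
      have hy1 : l y = M := mul_left_cancel₀ hb.ne' (by linarith)
      exact convex_segment u v (hx' hx1) (hy' hy1) ha.le hb.le hab
  refine ⟨(convex_convexHull ℝ V).segment_subset (subset_convexHull ℝ V hu)
    (subset_convexHull ℝ V hv), ?_⟩
  rintro x hx y hy z ⟨p, q, hp, hq, hpq, rfl⟩ ⟨a, b, ha, hb, hab, h⟩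
  apply (key hx).2
  have hl := congrArg l h
  simp only [map_add, map_smul, smul_eq_mul, hlu, hlv] at hl
  rw [← add_mul, hpq, one_mul] at hl
  have hM : M = a * M + b * M := by rw [← add_mul, hab, one_mul]
  have h1 := mul_le_mul_of_nonneg_left (key hx).1 ha.le
  have h2 := mul_le_mul_of_nonneg_left (key hy).1 hb.le
  exact mul_left_cancel₀ ha.ne' (by linarith)

/-- `isExtreme_segment_of_functional` for the functional with weight `2` on `A ∩ B`, `ε` on `A △ B`
and `-2` off `A ∪ B`. -/
lemma isExtreme_of_weights {d : ℕ} {S : Finset ℕ} {A B : Finset (Fin d)}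
    (hA : A.card ∈ S) (hB : B.card ∈ S) (ε M : ℤ)
    (hMA : 2 * ((A ∩ B).card : ℤ) + ε * (A ∩ symmDiff A B).card = M)
    (hMB : 2 * ((A ∩ B).card : ℤ) + ε * (B ∩ symmDiff A B).card = M)
    (hle : ∀ X : Finset (Fin d), X.card ∈ S →
      2 * ((X ∩ (A ∩ B)).card : ℤ) + ε * (X ∩ symmDiff A B).card - 2 * (X \ (A ∪ B)).card ≤ M)
    (heq : ∀ X : Finset (Fin d), X.card ∈ S →
      2 * ((X ∩ (A ∩ B)).card : ℤ) + ε * (X ∩ symmDiff A B).card - 2 * (X \ (A ∪ B)).card = M →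
      X = A ∨ X = B) :
    IsExtreme ℝ (Shyp d S) (segment ℝ (eVec d A) (eVec d B)) := by
  let w : Fin d → ℝ := fun i =>
    2 * eVec d (A ∩ B) i + ε * eVec d (symmDiff A B) i - 2 * eVec d (A ∪ B)ᶜ i
  let l : (Fin d → ℝ) →ₗ[ℝ] ℝ := ∑ i, w i • LinearMap.proj i
  have hdot : ∀ I X : Finset (Fin d), ∑ i, eVec d I i * eVec d X i = ((X ∩ I).card : ℝ) := by
    intro I X
    simp [eVec, ← ite_and, ← Finset.mem_inter, Finset.inter_comm]
  have hl : ∀ X : Finset (Fin d), l (eVec d X) =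
      ((2 * ((X ∩ (A ∩ B)).card : ℤ) + ε * (X ∩ symmDiff A B).card
        - 2 * (X \ (A ∪ B)).card : ℤ) : ℝ) := by
    intro X
    have hX : X \ (A ∪ B) = X ∩ (A ∪ B)ᶜ := by ext; simp
    rw [hX]
    push_cast
    rw [← hdot, ← hdot, ← hdot]
    simp only [l, w, LinearMap.sum_apply, LinearMap.smul_apply, LinearMap.proj_apply, smul_eq_mul,
      Finset.mul_sum, ← Finset.sum_add_distrib, ← Finset.sum_sub_distrib]
    exact Finset.sum_congr rfl fun i _ => by ring
  refine isExtreme_segment_of_functional ⟨A, hA, rfl⟩ ⟨B, hB, rfl⟩ l M ?_ ?_ ?_ ?_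
  · rw [hl, ← hMA]
    have h1 : A ∩ (A ∩ B) = A ∩ B := by ext; simp
    have h2 : A \ (A ∪ B) = ∅ := by ext; simp; tauto
    simp [h1, h2]
  · rw [hl, ← hMB]
    have h1 : B ∩ (A ∩ B) = A ∩ B := by ext; simp
    have h2 : B \ (A ∪ B) = ∅ := by ext; simp; tauto
    simp [h1, h2]
  · rintro _ ⟨X, hX, rfl⟩
    rw [hl]
    exact_mod_cast hle X hX
  · rintro _ ⟨X, hX, rfl⟩ h
    rw [hl] at h
    rcases heq X hX (by exact_mod_cast h) with rfl | rfl <;> simp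

lemma isExtreme_of_ssubset {d : ℕ} {S : Finset ℕ} {A B : Finset (Fin d)}
    (hA : A.card ∈ S) (hB : B.card ∈ S) (hAB : A ⊂ B)
    (hS : ∀ s ∈ S, ¬(A.card < s ∧ s < B.card)) :
    IsExtreme ℝ (Shyp d S) (segment ℝ (eVec d A) (eVec d B)) := by
  have hI : A ∩ B = A := Finset.inter_eq_left.2 hAB.subset
  have hU : A ∪ B = B := Finset.union_eq_right.2 hAB.subset
  apply isExtreme_of_weights hA hB 0 (2 * A.card)
  · simp [hI]
  · simp [hI]
  · intro X _
    have := Finset.card_le_card (Finset.inter_subset_right : X ∩ A ⊆ A)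
    rw [hI]
    omega
  · intro X hX h
    rw [hI, hU] at h
    have h1 := Finset.card_le_card (Finset.inter_subset_right : X ∩ A ⊆ A)
    have h2 : A ⊆ X := Finset.inter_eq_right.1
      (Finset.eq_of_subset_of_card_le Finset.inter_subset_right (by omega))
    have h3 : X ⊆ B := Finset.sdiff_eq_empty_iff_subset.1 (Finset.card_eq_zero.1 (by omega))
    have h4 := Finset.card_le_card h2
    have h5 := Finset.card_le_card h3
    by_cases h6 : X.card ≤ A.card
    · exact Or.inl (Finset.eq_of_subset_of_card_le h2 h6).symm
    · have := hS _ hX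
      exact Or.inr (Finset.eq_of_subset_of_card_le h3 (by omega))

lemma card_symmDiff_eq {α : Type*} [DecidableEq α] (A B : Finset α) :
    (symmDiff A B).card = (A \ B).card + (B \ A).card :=
  Finset.card_union_of_disjoint disjoint_sdiff_sdiff

lemma isExtreme_of_card_symmDiff {d : ℕ} {S : Finset ℕ} {A B : Finset (Fin d)}
    (hA : A.card ∈ S) (hB : B.card ∈ S) (hcard : A.card = B.card)
    (hAB : (symmDiff A B).card = 2) (hS : ¬(A.card - 1 ∈ S ∧ A.card + 1 ∈ S)) :
    IsExtreme ℝ (Shyp d S) (segment ℝ (eVec d A) (eVec d B)) := by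
  have hs := card_symmDiff_eq A B
  have h1 := Finset.card_sdiff_add_card_inter A B
  have h2 := Finset.card_sdiff_add_card_inter B A
  rw [Finset.inter_comm B A] at h2
  have hDA : A ∩ symmDiff A B = A \ B := by ext; simp [Finset.mem_symmDiff]; tauto
  have hDB : B ∩ symmDiff A B = B \ A := by ext; simp [Finset.mem_symmDiff]; tauto
  -- The three pieces of `X` cut out by `A` and `B`, and the bounds on their sizes.
  have hX : ∀ X : Finset (Fin d), X.card =
      (X ∩ (A ∩ B)).card + (X ∩ symmDiff A B).card + (X \ (A ∪ B)).card ∧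
      (X ∩ (A ∩ B)).card ≤ (A ∩ B).card ∧ (X ∩ symmDiff A B).card ≤ 2 := by
    intro X
    refine ⟨?_, Finset.card_le_card Finset.inter_subset_right,
      hAB ▸ Finset.card_le_card Finset.inter_subset_right⟩
    rw [← Finset.card_union_of_disjoint, ← Finset.card_union_of_disjoint]
    · congr 1
      ext i
      simp only [Finset.mem_union, Finset.mem_inter, Finset.mem_sdiff, Finset.mem_symmDiff]
      tauto
    · rw [Finset.disjoint_left]
      intro i
      simp only [Finset.mem_union, Finset.mem_inter, Finset.mem_sdiff, Finset.mem_symmDiff]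
      tauto
    · rw [Finset.disjoint_left]
      intro i
      simp only [Finset.mem_inter, Finset.mem_symmDiff]
      tauto
  have hend : ∀ X : Finset (Fin d), X.card = A.card → (X ∩ symmDiff A B).card = 1 →
      (X \ (A ∪ B)).card = 0 → X = A ∨ X = B := by
    intro X hXA hq hr
    have hXU : X ⊆ A ∪ B := Finset.sdiff_eq_empty_iff_subset.1 (Finset.card_eq_zero.1 hr)
    by_cases h3 : X ⊆ A
    · exact Or.inl (Finset.eq_of_subset_of_card_le h3 hXA.ge)
    by_cases h4 : X ⊆ B
    · exact Or.inr (Finset.eq_of_subset_of_card_le h4 (by omega))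
    exfalso
    obtain ⟨x, hx, hxA⟩ := Finset.not_subset.1 h3
    obtain ⟨y, hy, hyB⟩ := Finset.not_subset.1 h4
    have hx' := hXU hx
    have hy' := hXU hy
    rw [Finset.mem_union] at hx' hy'
    have hxy : x = y := Finset.card_le_one.1 hq.le x
      (by simp only [Finset.mem_inter, Finset.mem_symmDiff]; tauto) y
      (by simp only [Finset.mem_inter, Finset.mem_symmDiff]; tauto)
    subst hxy
    tauto
  by_cases hS1 : A.card + 1 ∈ S
  · have hS0 : A.card - 1 ∉ S := fun h => hS ⟨h, hS1⟩
    apply isExtreme_of_weights hA hB (-1) (2 * (A ∩ B).card - 1)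
    · rw [hDA]; omega
    · rw [hDB]; omega
    · intro X hXS
      obtain ⟨h3, h4, h5⟩ := hX X
      have : X.card ≠ A.card - 1 := fun h => hS0 (h ▸ hXS)
      omega
    · intro X hXS h
      obtain ⟨h3, h4, h5⟩ := hX X
      have : X.card ≠ A.card - 1 := fun h => hS0 (h ▸ hXS)
      exact hend X (by omega) (by omega) (by omega)
  · apply isExtreme_of_weights hA hB 1 (2 * (A ∩ B).card + 1)
    · rw [hDA]; omega
    · rw [hDB]; omega
    · intro X hXS
      obtain ⟨h3, h4, h5⟩ := hX X
      have : X.card ≠ A.card + 1 := fun h => hS1 (h ▸ hXS)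
      omega
    · intro X hXS h
      obtain ⟨h3, h4, h5⟩ := hX X
      have : X.card ≠ A.card + 1 := fun h => hS1 (h ▸ hXS)
      exact hend X (by omega) (by omega) (by omega)

/-- If `[e_A, e_B]` is extreme, no other pair of vertices has the same midpoint. -/
lemma eq_or_eq_of_add_eq {d : ℕ} {S : Finset ℕ} {A B C D : Finset (Fin d)}
    (h : IsExtreme ℝ (Shyp d S) (segment ℝ (eVec d A) (eVec d B)))
    (hC : C.card ∈ S) (hD : D.card ∈ S)
    (hsum : eVec d C + eVec d D = eVec d A + eVec d B) : C = A ∨ C = B := by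
  apply eq_or_eq_of_mem_segment
  have hmid : (1 / 2 : ℝ) • (eVec d A + eVec d B) ∈ segment ℝ (eVec d A) (eVec d B) :=
    ⟨1 / 2, 1 / 2, by norm_num, by norm_num, by norm_num, by rw [smul_add]⟩
  refine h.2 (eVec_mem_Shyp hC) (eVec_mem_Shyp hD) hmid ?_
  exact ⟨1 / 2, 1 / 2, by norm_num, by norm_num, by norm_num, by rw [← hsum, smul_add]⟩

lemma card_filter_mem_powersetCard {α : Type*} [DecidableEq α] {D : Finset α} {i : α}
    (hi : i ∈ D) (k : ℕ) :
    ((D.powersetCard (k + 1)).filter (fun T => i ∈ T)).card = (D.card - 1).choose k := by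
  rw [← Finset.card_erase_of_mem hi, ← Finset.card_powersetCard]
  refine Finset.card_nbij' (fun T => T.erase i) (fun T => insert i T) ?_ ?_ ?_ ?_
  · intro T hT
    simp only [Finset.coe_filter, Finset.mem_powersetCard, mem_ofPred_eq] at hT
    simp only [Finset.mem_coe, Finset.mem_powersetCard]
    exact ⟨Finset.erase_subset_erase _ hT.1.1, by rw [Finset.card_erase_of_mem hT.2]; omega⟩
  · intro T hT
    simp only [Finset.mem_coe, Finset.mem_powersetCard] at hT
    simp only [Finset.coe_filter, Finset.mem_powersetCard, mem_ofPred_eq]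
    have hiT : i ∉ T := fun h => Finset.notMem_erase i D (hT.1 h)
    refine ⟨⟨Finset.insert_subset hi (hT.1.trans (Finset.erase_subset _ _)), ?_⟩,
      Finset.mem_insert_self _ _⟩
    rw [Finset.card_insert_of_notMem hiT, hT.2]
  · intro T hT
    simp only [Finset.coe_filter, mem_ofPred_eq] at hT
    exact Finset.insert_erase hT.2
  · intro T hT
    simp only [Finset.mem_coe, Finset.mem_powersetCard] at hT
    exact Finset.erase_insert fun h => Finset.notMem_erase i D (hT.1 h)

/-- The complement of an extreme subset is convex, so it would contain the average of the `e_C` with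
`A ⊆ C ⊆ B`, `|C| = s`; by symmetry that average lies on the segment `[e_A, e_B]`. -/
lemma not_isExtreme_of_between {d : ℕ} {S : Finset ℕ} {A B : Finset (Fin d)} (hAB : A ⊆ B)
    {s : ℕ} (hs : s ∈ S) (hAs : A.card < s) (hsB : s < B.card) :
    ¬ IsExtreme ℝ (Shyp d S) (segment ℝ (eVec d A) (eVec d B)) := by
  intro h
  obtain ⟨k, rfl⟩ : ∃ k, s = A.card + (k + 1) := ⟨s - A.card - 1, by omega⟩
  have hDcard := Finset.card_sdiff_add_card_eq_card hAB
  set D := B \ A with hD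
  set P := D.powersetCard (k + 1) with hP
  set n : ℕ := (D.card - 1).choose k with hn
  have hdisj : ∀ T ∈ P, Disjoint A T := fun T hT =>
    Finset.disjoint_sdiff.mono_right (Finset.mem_powersetCard.1 hT).1
  have hcount : ∀ i ∈ D, (P.filter (fun T => i ∈ T)).card = n :=
    fun i hi => card_filter_mem_powersetCard hi k
  have hPpos : 0 < P.card := by
    rw [hP, Finset.card_powersetCard]
    exact Nat.choose_pos (by omega)
  have hnP : n ≤ P.card := by
    obtain ⟨i, hi⟩ : D.Nonempty := Finset.card_pos.1 (by omega)
    rw [← hcount i hi]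
    exact Finset.card_filter_le _ _
  have hPpos' : (0 : ℝ) < P.card := by exact_mod_cast hPpos
  have hnP' : (n : ℝ) ≤ P.card := by exact_mod_cast hnP
  have hmem : ∑ T ∈ P, (1 / (P.card : ℝ)) • eVec d (A ∪ T) ∈
      Shyp d S \ segment ℝ (eVec d A) (eVec d B) := by
    refine (h.convex_sdiff (convex_convexHull ℝ _)).sum_mem (fun _ _ => by positivity) ?_ ?_
    · rw [Finset.sum_const, nsmul_eq_mul]
      field_simp
    · intro T hT
      have hc : (A ∪ T).card = A.card + (k + 1) := by
        rw [Finset.card_union_of_disjoint (hdisj T hT), (Finset.mem_powersetCard.1 hT).2]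
      refine ⟨eVec_mem_Shyp (hc ▸ hs), fun hseg => ?_⟩
      rcases eq_or_eq_of_mem_segment hseg with h' | h' <;> rw [h'] at hc <;> omega
  apply hmem.2
  refine ⟨1 - n / P.card, n / P.card, ?_, by positivity, by ring, ?_⟩
  · rw [sub_nonneg, div_le_one hPpos']
    exact hnP'
  ext i
  simp only [Pi.add_apply, Pi.smul_apply, smul_eq_mul, Finset.sum_apply, ← Finset.mul_sum]
  by_cases hiA : i ∈ A
  · have hiB := hAB hiA
    simp [eVec, hiA, hiB, hPpos'.ne']
  by_cases hiB : i ∈ B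
  · have hi : i ∈ D := Finset.mem_sdiff.2 ⟨hiB, hiA⟩
    simp [eVec, hiA, hiB, hcount i hi]
    ring
  · have hi : ∀ T ∈ P, i ∉ T := fun T hT hiT =>
      hiB (Finset.mem_sdiff.1 ((Finset.mem_powersetCard.1 hT).1 hiT)).1
    have h0 : ∑ T ∈ P, eVec d (A ∪ T) i = 0 :=
      Finset.sum_eq_zero fun T hT => by simp [eVec, hiA, hi T hT]
    rw [h0]
    simp [eVec, hiA, hiB]

/-- Incomparable endpoints of an edge differ by a single exchange. -/
lemma sdiff_eq_singleton_of_isExtreme {d : ℕ} {S : Finset ℕ} {A B : Finset (Fin d)}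
    (hA : A.card ∈ S) (hB : B.card ∈ S)
    (h : IsExtreme ℝ (Shyp d S) (segment ℝ (eVec d A) (eVec d B)))
    {a b : Fin d} (haA : a ∈ A) (haB : a ∉ B) (hbB : b ∈ B) (hbA : b ∉ A) :
    A \ B = {a} ∧ B \ A = {b} := by
  have hab : a ≠ b := fun h => haB (h ▸ hbB)
  have hC : (insert b (A.erase a)).card = A.card := by
    rw [Finset.card_insert_of_notMem (fun h => hbA (Finset.mem_of_mem_erase h)),
      Finset.card_erase_add_one haA]
  have hD : (insert a (B.erase b)).card = B.card := by
    rw [Finset.card_insert_of_notMem (fun h => haB (Finset.mem_of_mem_erase h)),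
      Finset.card_erase_add_one hbB]
  have hsum : eVec d (insert b (A.erase a)) + eVec d (insert a (B.erase b)) =
      eVec d A + eVec d B := by
    ext i
    by_cases h1 : i = a
    · subst h1
      simp [eVec, hab, haA, haB]
    by_cases h2 : i = b
    · subst h2
      simp [eVec, hab.symm, hbA, hbB]
    simp [eVec, h1, h2]
  rcases eq_or_eq_of_add_eq h (hC ▸ hA) (hD ▸ hB) hsum with h' | h'
  · exact absurd (h' ▸ Finset.mem_insert_self b _) hbA
  · rw [← h']
    constructor
    · ext i
      by_cases h1 : i = a
      · subst h1; simp [hab, haA]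
      · simp [h1]; tauto
    · ext i
      by_cases h2 : i = b
      · subst h2; simp [hbA]
      · simp [h2]

/-- characterization of the edges of `Δ(d,S)`.  `[e_A, e_B]` is an
edge iff (i) `A ⊂ B` and no element of `S` lies strictly between `|A|` and `|B|`
(i.e. `|A|` and `|B|` are consecutive in `S`), or (ii) `|A| = |B|`,
`|A △ B| = 2` and not both `|A| - 1` and `|A| + 1` belong to `S`. -/
theorem edges_Shyp (d : ℕ) (hd : 1 ≤ d) (S : Finset ℕ) (hSd : ∀ s ∈ S, s ≤ d)
    (A B : Finset (Fin d)) (hA : A.card ∈ S) (hB : B.card ∈ S)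
    (hle : A.card ≤ B.card) (hne : A ≠ B) :
    (eVec d A ≠ eVec d B ∧
      IsExtreme ℝ (Shyp d S) (segment ℝ (eVec d A) (eVec d B))) ↔
    ((A ⊂ B ∧ ∀ s ∈ S, ¬(A.card < s ∧ s < B.card)) ∨
     (A.card = B.card ∧ (symmDiff A B).card = 2 ∧
        ¬(A.card - 1 ∈ S ∧ A.card + 1 ∈ S))) := by
  constructor
  · rintro ⟨-, h⟩
    by_cases hsub : A ⊆ B
    · exact Or.inl ⟨hsub.ssubset_of_ne hne, fun s hs hlt =>
        not_isExtreme_of_between hsub hs hlt.1 hlt.2 h⟩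
    right
    have hsub' : ¬ B ⊆ A := fun hBA => hne (Finset.eq_of_subset_of_card_le hBA hle).symm
    obtain ⟨a, haA, haB⟩ := Finset.not_subset.1 hsub
    obtain ⟨b, hbB, hbA⟩ := Finset.not_subset.1 hsub'
    obtain ⟨h1, h2⟩ := sdiff_eq_singleton_of_isExtreme hA hB h haA haB hbB hbA
    have hcA := Finset.card_sdiff_add_card_inter A B
    have hcB := Finset.card_sdiff_add_card_inter B A
    rw [Finset.inter_comm B A] at hcB
    have hcU := Finset.card_union_add_card_inter A B
    have hsd := card_symmDiff_eq A B
    rw [h1, Finset.card_singleton] at hcA hsd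
    rw [h2, Finset.card_singleton] at hcB hsd
    refine ⟨by omega, hsd, fun ⟨hm, hp⟩ => ?_⟩
    have hI : (A ∩ B).card = A.card - 1 := by omega
    have hU : (A ∪ B).card = A.card + 1 := by omega
    have hsum : eVec d (A ∩ B) + eVec d (A ∪ B) = eVec d A + eVec d B := by
      ext i
      by_cases h3 : i ∈ A <;> by_cases h4 : i ∈ B <;> simp [eVec, h3, h4]
    rcases eq_or_eq_of_add_eq h (hI ▸ hm) (hU ▸ hp) hsum with h' | h' <;> rw [h'] at hI <;> omega
  · rintro (⟨hAB, hS⟩ | ⟨hcard, hAB, hS⟩)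
    · exact ⟨fun h => hne (eVec_injective d h), isExtreme_of_ssubset hA hB hAB hS⟩
    · exact ⟨fun h => hne (eVec_injective d h), isExtreme_of_card_symmDiff hA hB hcard hAB hS⟩
end
end

section
/- For d ≥ 3, the even halfcube H_d has exactly d(d−1)·2^{d−3} edges. -/
/-!
The vertices of the halfcube are the indicator vectors of even subsets of `[d]`, and the endpoints
of an extreme segment are vertices. Two distinct even sets differ in an even number of elements.
If they differ in four or more, exchanging two of these elements produces another pair of even
sets with the same midpoint, so their segment is not a face (`card_symmDiff_of_isExtreme`).

If they differ in a set `T` of exactly two elements, the segment is the set of points of the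
halfcube whose coordinates outside `T` have their prescribed values (`cubeFace_eq_segment`): after
reflecting one endpoint to the origin, the halfcube satisfies `y i ≤ ∑ k ≠ i, y k` for every `i`,
which on this set forces the two coordinates in `T` to be equal. Fixing coordinates of a subset of
the cube to be `0` or `1` always gives a face (`isExtreme_cubeFace`).

Hence edges correspond bijectively to pairs `(T, C)` of a two-element set `T` of varying
coordinates and a set `C ⊆ Tᶜ` of coordinates constantly equal to `1`: every such pair occurs,
since exactly one parity class of subsets of `T` completes `C` to an even set
(`exists_even_pair`). There are `d.choose 2 * 2 ^ (d - 2)` of them.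
-/


open Set Pointwise

noncomputable section

/-- The part of the halfcube on which every coordinate outside `T` agrees with the indicator
vector of `C`; for `T.card = 2` and `C` disjoint from `T` these are exactly the edges. -/
def cubeFace (d : ℕ) (T C : Finset (Fin d)) : Set (Fin d → ℝ) :=
  {x ∈ halfcube d | ∀ k ∉ T, x k = eVec d C k}

lemma eVec_apply (d : ℕ) (A : Finset (Fin d)) (i : Fin d) :
    eVec d A i = if i ∈ A then 1 else 0 := rfl

lemma eVec_mem_halfcube {d : ℕ} {A : Finset (Fin d)} (hA : Even A.card) :
    eVec d A ∈ halfcube d := by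
  refine subset_convexHull ℝ _ ⟨A, ?_, rfl⟩
  have := A.card_le_univ
  simp only [Fintype.card_fin] at this
  simp [hA]
  omega

lemma eVec_eq_iff {d : ℕ} {A B : Finset (Fin d)} {k l : Fin d} :
    eVec d A k = eVec d B l ↔ (k ∈ A ↔ l ∈ B) := by
  simp only [eVec_apply]
  split_ifs <;> simp_all

lemma even_card_symmDiff {α : Type*} [DecidableEq α] (A B : Finset α) :
    Even (symmDiff A B).card ↔ (Even A.card ↔ Even B.card) := by
  have h1 := Finset.card_sdiff_add_card_inter A B
  have h2 := Finset.card_sdiff_add_card_inter B A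
  have h3 : (symmDiff A B).card = (A \ B).card + (B \ A).card :=
    Finset.card_union_of_disjoint (disjoint_sdiff_sdiff)
  rw [Finset.inter_comm] at h2
  simp only [Nat.even_iff]
  omega

lemma halfcube_box {d : ℕ} {x : Fin d → ℝ} (hx : x ∈ halfcube d) (k : Fin d) :
    0 ≤ x k ∧ x k ≤ 1 := by
  have : halfcube d ⊆ {x | 0 ≤ x k ∧ x k ≤ 1} := by
    refine convexHull_min ?_ ?_
    · rintro _ ⟨A, -, rfl⟩
      simp only [mem_ofPred_eq, eVec_apply]
      split_ifs <;> norm_num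
    · rintro x ⟨hx0, hx1⟩ y ⟨hy0, hy1⟩ a b ha hb hab
      simp only [mem_ofPred_eq, Pi.add_apply, Pi.smul_apply, smul_eq_mul]
      constructor <;> nlinarith
  exact this hx

/-- The coordinate `x k`, reflected to `1 - x k` when `k ∈ A`. -/
def reflect (d : ℕ) (A : Finset (Fin d)) (x : Fin d → ℝ) (k : Fin d) : ℝ :=
  eVec d A k + (1 - 2 * eVec d A k) * x k

lemma reflect_eVec {d : ℕ} (A B : Finset (Fin d)) (k : Fin d) :
    reflect d A (eVec d B) k = eVec d (symmDiff A B) k := by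
  simp only [reflect, eVec_apply, Finset.mem_symmDiff]
  split_ifs <;> first | tauto | norm_num

/-- The vertices of the cube adjacent to an even vertex `A` are odd, and this inequality cuts one
of them off: at a vertex `B` it says that `A ∆ B`, being even, is not `{i}`. -/
lemma reflect_le_sum {d : ℕ} {A : Finset (Fin d)} (hA : Even A.card) {x : Fin d → ℝ}
    (hx : x ∈ halfcube d) (i : Fin d) :
    reflect d A x i ≤ ∑ k ∈ Finset.univ.erase i, reflect d A x k := by
  have : halfcube d ⊆
      {x | reflect d A x i ≤ ∑ k ∈ Finset.univ.erase i, reflect d A x k} := by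
    refine convexHull_min ?_ ?_
    · rintro _ ⟨B, hB, rfl⟩
      have hB' : Even B.card := (Finset.mem_filter.1 hB).2
      have hE : Even (symmDiff A B).card := (even_card_symmDiff A B).2 (by tauto)
      simp only [mem_ofPred_eq, reflect_eVec]
      have h0 : ∀ k ∈ Finset.univ.erase i, 0 ≤ eVec d (symmDiff A B) k := by
        intro k _
        rw [eVec_apply]
        split_ifs <;> norm_num
      by_cases hi : i ∈ symmDiff A B
      · have hc : 1 < (symmDiff A B).card := by
          have := Finset.card_pos.2 ⟨i, hi⟩
          obtain ⟨m, hm⟩ := hE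
          omega
        obtain ⟨j, hj, hji⟩ := Finset.exists_mem_ne hc i
        have := Finset.single_le_sum h0 (Finset.mem_erase.2 ⟨hji, Finset.mem_univ j⟩)
        rw [eVec_apply, if_pos hi]
        rwa [eVec_apply, if_pos hj] at this
      · rw [eVec_apply, if_neg hi]
        exact Finset.sum_nonneg h0
    · intro x hx y hy a b ha hb hab
      have key : ∀ k, reflect d A (a • x + b • y) k
          = a * reflect d A x k + b * reflect d A y k := by
        intro k
        simp only [reflect, Pi.add_apply, Pi.smul_apply, smul_eq_mul]
        linear_combination (-eVec d A k) * hab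
      simp only [mem_ofPred_eq, key, Finset.sum_add_distrib, ← Finset.mul_sum] at *
      gcongr
  exact this hx

lemma isExtreme_cubeFace (d : ℕ) (T C : Finset (Fin d)) :
    IsExtreme ℝ (halfcube d) (cubeFace d T C) := by
  refine ⟨fun x hx => hx.1, ?_⟩
  rintro x hx y hy z ⟨-, hz⟩ ⟨a, b, ha, hb, hab, rfl⟩
  refine ⟨hx, fun k hk => ?_⟩
  have h := hz k hk
  obtain ⟨hx0, hx1⟩ := halfcube_box hx k
  obtain ⟨hy0, hy1⟩ := halfcube_box hy k
  simp only [Pi.add_apply, Pi.smul_apply, smul_eq_mul] at h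
  rw [eVec_apply] at h ⊢
  split_ifs at h ⊢
  · nlinarith
  · nlinarith

/-- Two even vertices at Hamming distance `2` span a face `cubeFace`: the coordinates outside
`A ∆ B` are fixed, and `reflect_le_sum` forces the two remaining reflected coordinates
to be equal. -/
lemma cubeFace_eq_segment {d : ℕ} {A B C : Finset (Fin d)} (hA : Even A.card)
    (hB : Even B.card) (hAB : (symmDiff A B).card = 2) (hC : A \ symmDiff A B = C) :
    cubeFace d (symmDiff A B) C = segment ℝ (eVec d A) (eVec d B) := by
  have hCk : ∀ k ∉ symmDiff A B, eVec d C k = eVec d A k := by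
    intro k hk
    rw [eVec_eq_iff, ← hC, Finset.mem_sdiff]
    tauto
  have hBk : ∀ k ∉ symmDiff A B, eVec d B k = eVec d A k := by
    intro k hk
    rw [eVec_eq_iff]
    rw [Finset.mem_symmDiff] at hk
    tauto
  apply Subset.antisymm
  · rintro x ⟨hx, hxC⟩
    obtain ⟨i, j, hij, hT⟩ := Finset.card_eq_two.1 hAB
    have hz : ∀ k ∉ symmDiff A B, reflect d A x k = 0 := by
      intro k hk
      rw [reflect, hxC k hk, hCk k hk, eVec_apply]
      split_ifs <;> norm_num
    have hs : ∀ i j, i ≠ j → symmDiff A B = {i, j} → reflect d A x i ≤ reflect d A x j := by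
      intro i j hij hT
      refine (reflect_le_sum hA hx i).trans_eq ?_
      refine Finset.sum_eq_single j (fun k hk hkj => hz k ?_) (fun h => ?_)
      · rw [hT]
        simp [hkj, (Finset.mem_erase.1 hk).1]
      · simp [hij.symm] at h
    have hle := le_antisymm (hs i j hij hT) (hs j i hij.symm (by rw [hT, Finset.pair_comm]))
    obtain ⟨hx0, hx1⟩ := halfcube_box hx i
    refine ⟨1 - reflect d A x i, reflect d A x i, ?_, ?_, by ring, ?_⟩
    · rw [reflect, eVec_apply]
      split_ifs <;> linarith
    · rw [reflect, eVec_apply]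
      split_ifs <;> linarith
    · funext k
      simp only [Pi.add_apply, Pi.smul_apply, smul_eq_mul]
      by_cases hk : k ∈ symmDiff A B
      · have hr : reflect d A x i = reflect d A x k := by
          rw [hT] at hk
          rcases Finset.mem_insert.1 hk with rfl | hk
          · rfl
          · rw [Finset.mem_singleton.1 hk, hle]
        rw [hr, reflect]
        simp only [eVec_apply]
        rw [Finset.mem_symmDiff] at hk
        split_ifs <;> first | tauto | ring
      · rw [hxC k hk, hCk k hk, hBk k hk]
        ring
  · refine (?_ : Convex ℝ (cubeFace d (symmDiff A B) C)).segment_subset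
      ⟨eVec_mem_halfcube hA, fun k hk => (hCk k hk).symm⟩
      ⟨eVec_mem_halfcube hB, fun k hk => (hBk k hk).trans (hCk k hk).symm⟩
    rintro x ⟨hx, hxC⟩ y ⟨hy, hyC⟩ a b ha hb hab
    refine ⟨convex_convexHull ℝ _ hx hy ha hb hab, fun k hk => ?_⟩
    simp only [Pi.add_apply, Pi.smul_apply, smul_eq_mul, hxC k hk, hyC k hk]
    rw [← add_mul, hab, one_mul]

lemma left_mem_extremePoints_segment {d : ℕ} (u v : Fin d → ℝ) :
    u ∈ (segment ℝ u v).extremePoints ℝ := by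
  by_cases huv : u = v
  · subst huv
    simp
  obtain ⟨k, hk⟩ := Function.ne_iff.1 huv
  refine mem_extremePoints_iff_left.2 ⟨left_mem_segment ℝ u v, ?_⟩
  rintro _ ⟨a, s, ha, hs, has, rfl⟩ _ ⟨b, t, hb, ht, hbt, rfl⟩ ⟨p, q, hp, hq, hpq, h⟩
  have h' := congrFun h k
  simp only [Pi.add_apply, Pi.smul_apply, smul_eq_mul] at h'
  have h0 : (p * s + q * t) * (v k - u k) = 0 := by
    have ha : a = 1 - s := by linarith
    have hb : b = 1 - t := by linarith
    have hp : p = 1 - q := by linarith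
    subst ha hb hp
    linear_combination h'
  have h1 : p * s + q * t = 0 :=
    (mul_eq_zero.1 h0).resolve_right (sub_ne_zero.2 (Ne.symm hk))
  have hs0 : s = 0 := by
    by_contra hne
    have : 0 < p * s := mul_pos hp (lt_of_le_of_ne hs (Ne.symm hne))
    have : 0 ≤ q * t := mul_nonneg hq.le ht
    linarith
  have ha1 : a = 1 := by linarith
  simp [hs0, ha1]

lemma exists_eVec_of_isExtreme {d : ℕ} {u v : Fin d → ℝ}
    (h : IsExtreme ℝ (halfcube d) (segment ℝ u v)) :
    ∃ A : Finset (Fin d), Even A.card ∧ u = eVec d A := by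
  have h1 := h.extremePoints_subset_extremePoints (left_mem_extremePoints_segment u v)
  obtain ⟨A, hA, rfl⟩ := extremePoints_convexHull_subset h1
  exact ⟨A, (Finset.mem_filter.1 hA).2, rfl⟩

/-- If `A ∆ B` has at least four elements, swapping two of the coordinates `i, j ∈ A ∆ B` gives
even vertices `A ∆ {i, j}` and `B ∆ {i, j}` with the same midpoint as `A` and `B`, so the
segment between `A` and `B` is not a face. -/
lemma card_symmDiff_of_isExtreme {d : ℕ} {A B : Finset (Fin d)} (hA : Even A.card)
    (hB : Even B.card) (hAB : A ≠ B)
    (h : IsExtreme ℝ (halfcube d) (segment ℝ (eVec d A) (eVec d B))) :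
    (symmDiff A B).card = 2 := by
  have hE : Even (symmDiff A B).card := (even_card_symmDiff A B).2 (by tauto)
  have h0 : 0 < (symmDiff A B).card := by
    rw [Finset.card_pos, Finset.nonempty_iff_ne_empty]
    intro h
    exact hAB (symmDiff_eq_bot.1 h)
  by_contra hne
  have h2 : 2 < (symmDiff A B).card := by
    obtain ⟨m, hm⟩ := hE
    omega
  obtain ⟨i, j, k, hi, hj, hk, hij, hik, hjk⟩ := Finset.two_lt_card_iff.1 h2
  have hc : Even ({i, j} : Finset (Fin d)).card := by rw [Finset.card_pair hij]; exact even_two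
  have hA' := (even_card_symmDiff A {i, j}).2 (by tauto)
  have hB' := (even_card_symmDiff B {i, j}).2 (by tauto)
  have hmid : ∀ l, eVec d (symmDiff A {i, j}) l + eVec d (symmDiff B {i, j}) l
      = eVec d A l + eVec d B l := by
    intro l
    have hl : l ∈ ({i, j} : Finset (Fin d)) → l ∈ symmDiff A B := by
      intro hl
      rcases Finset.mem_insert.1 hl with rfl | hl
      · exact hi
      · rwa [Finset.mem_singleton.1 hl]
    simp only [eVec_apply, Finset.mem_symmDiff] at hl ⊢
    by_cases h3 : l ∈ ({i, j} : Finset (Fin d))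
    · rcases hl h3 with ⟨h1, h2⟩ | ⟨h1, h2⟩
      all_goals
        simp only [h1, h2, h3, not_true_eq_false, not_false_eq_true, and_self, and_false,
          or_true, or_self, if_true, if_false]
        norm_num
    · simp only [h3, not_false_eq_true, and_true, false_and, or_false]
  have hmem := h.left_mem_of_mem_openSegment (eVec_mem_halfcube hA') (eVec_mem_halfcube hB')
    (z := (1 / 2 : ℝ) • eVec d A + (1 / 2 : ℝ) • eVec d B)
    ⟨1 / 2, 1 / 2, by norm_num, by norm_num, by norm_num, rfl⟩
    ⟨1 / 2, 1 / 2, by norm_num, by norm_num, by norm_num, by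
      rw [← smul_add, ← smul_add]
      congr 1
      exact funext hmid⟩
  obtain ⟨a, b, ha, hb, hab, hx⟩ := hmem
  -- Coordinate `i` forces the point to be `B`, coordinate `k` forces it to be `A`.
  have hxi := congrFun hx i
  have hxk := congrFun hx k
  simp only [Pi.add_apply, Pi.smul_apply, smul_eq_mul, eVec_apply, Finset.mem_symmDiff,
    Finset.mem_insert, Finset.mem_singleton] at hxi hxk hi hk
  simp only [true_or, not_true, and_false, true_and, or_false, false_or, Ne.symm hik,
    Ne.symm hjk, not_false_eq_true, and_true, false_and] at hxi hxk
  split_ifs at hxi hxk <;> first | tauto | linarith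

lemma exists_even_pair {d : ℕ} {T C : Finset (Fin d)} (hT : T.card = 2) (hCT : Disjoint C T) :
    ∃ A B : Finset (Fin d), Even A.card ∧ Even B.card ∧ symmDiff A B = T ∧
      A \ symmDiff A B = C := by
  obtain ⟨A, hA, hAC⟩ : ∃ A : Finset (Fin d), Even A.card ∧ A \ T = C := by
    by_cases hC : Even C.card
    · exact ⟨C, hC, Finset.sdiff_eq_self_of_disjoint hCT⟩
    · obtain ⟨i, hi⟩ : T.Nonempty := Finset.card_pos.1 (by omega)
      have hiC : i ∉ C := fun h => Finset.disjoint_left.1 hCT h hi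
      refine ⟨insert i C, ?_, ?_⟩
      · rw [Finset.card_insert_of_notMem hiC]
        exact (Nat.not_even_iff_odd.1 hC).add_one
      · rw [Finset.insert_sdiff_of_mem _ hi, Finset.sdiff_eq_self_of_disjoint hCT]
  have hAT : symmDiff A (symmDiff A T) = T := symmDiff_symmDiff_cancel_left A T
  refine ⟨A, symmDiff A T, hA, (even_card_symmDiff A T).2 ?_, hAT, by rw [hAT, hAC]⟩
  simp [hA, hT]

/-- A face `cubeFace d T C` determines `T` as the set of coordinates that vary on it, and `C` by
the fixed coordinates. -/
lemma cubeFace_inj {d : ℕ} {T C T' C' : Finset (Fin d)} (hT : T.card = 2) (hCT : Disjoint C T)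
    (hT' : T'.card = 2) (hCT' : Disjoint C' T') (h : cubeFace d T C = cubeFace d T' C') :
    T = T' ∧ C = C' := by
  have sub : ∀ {T C T' C' : Finset (Fin d)}, T.card = 2 → Disjoint C T →
      cubeFace d T C = cubeFace d T' C' → T ⊆ T' := by
    intro T C T' C' hT hCT h k hk
    obtain ⟨A, B, hA, hB, hAB, hC⟩ := exists_even_pair hT hCT
    have hs := cubeFace_eq_segment hA hB (hAB ▸ hT) hC
    rw [hAB, h] at hs
    by_contra hk'
    have h1 := (hs ▸ left_mem_segment ℝ (eVec d A) (eVec d B) :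
      eVec d A ∈ cubeFace d T' C').2 k hk'
    have h2 := (hs ▸ right_mem_segment ℝ (eVec d A) (eVec d B) :
      eVec d B ∈ cubeFace d T' C').2 k hk'
    rw [← h2, eVec_eq_iff] at h1
    rw [← hAB, Finset.mem_symmDiff] at hk
    tauto
  obtain rfl : T = T' := (sub hT hCT h).antisymm (sub hT' hCT' h.symm)
  refine ⟨rfl, ?_⟩
  obtain ⟨A, B, hA, hB, hAB, hC⟩ := exists_even_pair hT hCT
  have hs := cubeFace_eq_segment hA hB (hAB ▸ hT) hC
  rw [hAB] at hs
  have hm : eVec d A ∈ cubeFace d T C := hs ▸ left_mem_segment ℝ (eVec d A) (eVec d B)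
  have hm' : eVec d A ∈ cubeFace d T C' := h ▸ hm
  ext k
  by_cases hk : k ∈ T
  · exact iff_of_false (fun h => Finset.disjoint_left.1 hCT h hk)
      (fun h => Finset.disjoint_left.1 hCT' h hk)
  · rw [← eVec_eq_iff, ← hm.2 k hk, ← hm'.2 k hk]

/-- for `d ≥ 3`, the halfcube `H_d` has exactly `d(d-1)·2^(d-3)` edges. -/
theorem card_edges_halfcube (d : ℕ) (hd : 3 ≤ d) :
    {E : Set (Fin d → ℝ) | ∃ u v : Fin d → ℝ, u ≠ v ∧ E = segment ℝ u v ∧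
        IsExtreme ℝ (halfcube d) E}.ncard = d * (d - 1) * 2 ^ (d - 3) := by
  classical
  set P : Finset ((_ : Finset (Fin d)) × Finset (Fin d)) :=
    (Finset.powersetCard 2 (Finset.univ : Finset (Fin d))).sigma fun T => Tᶜ.powerset with hP
  have hmem : ∀ p ∈ P, p.1.card = 2 ∧ Disjoint p.2 p.1 := by
    intro p hp
    rw [hP, Finset.mem_sigma, Finset.mem_powersetCard, Finset.mem_powerset] at hp
    exact ⟨hp.1.2, Finset.subset_compl_iff_disjoint_right.1 hp.2⟩
  have himage : {E : Set (Fin d → ℝ) | ∃ u v : Fin d → ℝ, u ≠ v ∧ E = segment ℝ u v ∧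
      IsExtreme ℝ (halfcube d) E} =
      Set.image (fun p : (_ : Finset (Fin d)) × Finset (Fin d) => cubeFace d p.1 p.2) P := by
    ext E
    constructor
    · rintro ⟨u, v, huv, rfl, hE⟩
      obtain ⟨A, hA, rfl⟩ := exists_eVec_of_isExtreme hE
      obtain ⟨B, hB, rfl⟩ := exists_eVec_of_isExtreme (segment_symm ℝ (eVec d A) v ▸ hE)
      have hAB : A ≠ B := fun h => huv (congrArg (eVec d) h)
      have h2 := card_symmDiff_of_isExtreme hA hB hAB hE
      refine ⟨⟨symmDiff A B, A \ symmDiff A B⟩, ?_, cubeFace_eq_segment hA hB h2 rfl⟩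
      rw [hP, Finset.mem_coe, Finset.mem_sigma, Finset.mem_powersetCard, Finset.mem_powerset]
      exact ⟨⟨Finset.subset_univ _, h2⟩,
        Finset.subset_compl_iff_disjoint_right.2 Finset.sdiff_disjoint⟩
    · rintro ⟨⟨T, C⟩, hp, rfl⟩
      obtain ⟨hT, hCT⟩ : T.card = 2 ∧ Disjoint C T := hmem _ hp
      obtain ⟨A, B, hA, hB, hAB, hC⟩ := exists_even_pair hT hCT
      have hs := cubeFace_eq_segment hA hB (hAB ▸ hT) hC
      rw [hAB] at hs
      refine ⟨eVec d A, eVec d B, fun h => ?_, hs, isExtreme_cubeFace d T C⟩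
      have : A = B := by
        ext k
        rw [← eVec_eq_iff, h]
      rw [this, symmDiff_self] at hAB
      simp [← hAB] at hT
  have hinj : Set.InjOn (fun p : (_ : Finset (Fin d)) × Finset (Fin d) => cubeFace d p.1 p.2)
      (P : Set _) := by
    rintro ⟨T, C⟩ hp ⟨T', C'⟩ hp' h
    obtain ⟨hT, hCT⟩ := hmem _ hp
    obtain ⟨hT', hCT'⟩ := hmem _ hp'
    obtain ⟨rfl, rfl⟩ := cubeFace_inj hT hCT hT' hCT' h
    rfl
  have hcard : P.card = d.choose 2 * 2 ^ (d - 2) := by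
    rw [hP, Finset.card_sigma, Finset.sum_congr rfl (g := fun _ => 2 ^ (d - 2)) ?_]
    · simp
    · intro T hT
      rw [Finset.card_powerset, Finset.card_compl, Fintype.card_fin,
        (Finset.mem_powersetCard.1 hT).2]
  rw [himage, hinj.ncard_image, Set.ncard_coe_finset, hcard]
  obtain ⟨m, rfl⟩ := Nat.exists_eq_add_of_le' hd
  have h2 : (m + 3).choose 2 * 2 = (m + 3) * (m + 3 - 1) := by
    rw [Nat.choose_two_right]
    exact Nat.div_mul_cancel (Nat.even_mul_pred_self (m + 3)).two_dvd
  rw [← h2, show m + 3 - 2 = m + 1 by omega, Nat.add_sub_cancel, pow_succ]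
  ring
end
end

section
/- Let d ≥ 1 and S = {s_1 < s_2 < ⋯ < s_k} ⊆ {0,1,…,d} with k ≥ 2. Then Δ(d,S) = Δ(d,{s_1,s_2}) ∪ Δ(d,{s_2,s_3}) ∪ ⋯ ∪ Δ(d,{s_{k−1},s_k}). Moreover, for i < j, Δ(d,{s_i,s_{i+1}}) ∩ Δ(d,{s_j,s_{j+1}}) equals Δ(d,s_j) if j = i+1 and is empty if j > i+1. -/
/-!
Write `σ x = ∑ i, x i`. The proof rests on the integrality of cube slices: for a natural number
`n`, every point of `[0,1]^d` with `σ x = n` lies in `Δ(d,n)` (`slice_subset_Shyp`). The slice is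
compact and convex, so by Krein–Milman it suffices that its extreme points are 0/1-vectors. A
point with a non-integral coordinate has a second one, as the coordinate sum is an integer, and it
can then be moved both ways along `e_i - e_j`, so it is not extreme.

For the decomposition, let `x ∈ Δ(d,S)` with `p ≤ σ x ≤ q` for consecutive elements `p < q` of `S`.
The vertices of `Δ(d,S)` lie at levels `≤ p` or `≥ q`, so `x` lies on a segment `[y, z]` with
`σ y ≤ p` and `q ≤ σ z`. The segment meets the levels `p` and `q` in points of the cube, which by
integrality lie in `Δ(d,p)` and `Δ(d,q)`, and `x` lies between them (`mem_Shyp_pair`).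

For the intersections, `σ` takes values in `[s_i, s_{i+1}]` on `Δ(d,s_i,s_{i+1})`, so a common point
has `s_j ≤ σ x ≤ s_{i+1}`; this is impossible for `j > i + 1`, and for `j = i + 1` it puts `x` in the
slice at level `s_j`.
-/

open Set Pointwise

noncomputable section

lemma Shyp_mono {d : ℕ} {S T : Finset ℕ} (h : S ⊆ T) : Shyp d S ⊆ Shyp d T := by
  apply convexHull_mono
  rintro x ⟨A, hA, rfl⟩
  exact ⟨A, h hA, rfl⟩

lemma sum_eVec (d : ℕ) (A : Finset (Fin d)) : ∑ i, eVec d A i = A.card := by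
  simp [eVec]

lemma convex_cube_slab (d : ℕ) (a b : ℝ) :
    Convex ℝ {x : Fin d → ℝ | (∀ i, 0 ≤ x i ∧ x i ≤ 1) ∧ a ≤ ∑ i, x i ∧ ∑ i, x i ≤ b} := by
  rintro x ⟨hx, hx1, hx2⟩ y ⟨hy, hy1, hy2⟩ r t hr ht hrt
  have hs : ∑ i, (r • x + t • y) i = r * ∑ i, x i + t * ∑ i, y i := by
    simp [Finset.sum_add_distrib, Finset.mul_sum]
  obtain rfl : t = 1 - r := by linarith
  refine ⟨fun i => ?_, ?_, ?_⟩
  · have h1 := hx i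
    have h2 := hy i
    simp only [Pi.add_apply, Pi.smul_apply, smul_eq_mul]
    constructor <;> nlinarith
  · rw [hs]; nlinarith
  · rw [hs]; nlinarith

lemma hull_subset_slab {d : ℕ} {V : Set (Fin d → ℝ)} {a b : ℝ}
    (h : ∀ x ∈ V, ∃ A : Finset (Fin d), x = eVec d A ∧ a ≤ A.card ∧ (A.card : ℝ) ≤ b) :
    convexHull ℝ V ⊆
      {x : Fin d → ℝ | (∀ i, 0 ≤ x i ∧ x i ≤ 1) ∧ a ≤ ∑ i, x i ∧ ∑ i, x i ≤ b} := by
  refine convexHull_min (fun x hx => ?_) (convex_cube_slab d a b)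
  obtain ⟨A, rfl, h1, h2⟩ := h x hx
  refine ⟨fun i => ?_, ?_, ?_⟩
  · unfold eVec
    split_ifs <;> simp
  · rwa [sum_eVec]
  · rwa [sum_eVec]

lemma Shyp_subset_slab {d : ℕ} {S : Finset ℕ} {a b : ℕ} (h : ∀ n ∈ S, a ≤ n ∧ n ≤ b) :
    Shyp d S ⊆ {x : Fin d → ℝ | (∀ i, 0 ≤ x i ∧ x i ≤ 1) ∧
      (a : ℝ) ≤ ∑ i, x i ∧ ∑ i, x i ≤ (b : ℝ)} := by
  apply hull_subset_slab
  rintro x ⟨A, hA, rfl⟩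
  exact ⟨A, rfl, by exact_mod_cast (h _ hA).1, by exact_mod_cast (h _ hA).2⟩

lemma exists_other_fractional {d n : ℕ} {x : Fin d → ℝ} (hsum : ∑ i, x i = n) {i : Fin d}
    (h0 : 0 < x i) (h1 : x i < 1) : ∃ j, j ≠ i ∧ x j ≠ 0 ∧ x j ≠ 1 := by
  by_contra! hcon
  have hx : ∀ j ∈ Finset.univ.erase i, x j = if x j = 1 then (1 : ℝ) else 0 := by
    intro j hj
    split_ifs with h
    · exact h
    · by_contra h'
      exact h (hcon j (Finset.ne_of_mem_erase hj) h')
  rw [← Finset.add_sum_erase _ _ (Finset.mem_univ i), Finset.sum_congr rfl hx,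
    Finset.sum_boole] at hsum
  -- `x i` is a difference of two natural numbers, strictly between `0` and `1`.
  set c := ((Finset.univ.erase i).filter (fun j => x j = 1)).card
  have ha : (c : ℝ) < n := by linarith
  have hb : (n : ℝ) < c + 1 := by linarith
  have ha' : c < n := by exact_mod_cast ha
  have hb' : n < c + 1 := by exact_mod_cast hb
  omega

/-- The slice of the cube at an integral level is contained in (in fact equal to) the
hypersimplex. -/
lemma slice_subset_Shyp {d n : ℕ} {x : Fin d → ℝ} (hx : ∀ i, 0 ≤ x i ∧ x i ≤ 1)
    (hsum : ∑ i, x i = n) : x ∈ Shyp d {n} := by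
  set P : Set (Fin d → ℝ) :=
    {x | (∀ i, 0 ≤ x i ∧ x i ≤ 1) ∧ (n : ℝ) ≤ ∑ i, x i ∧ ∑ i, x i ≤ (n : ℝ)} with hP
  have hconv : Convex ℝ P := convex_cube_slab d n n
  have hcomp : IsCompact P := by
    have hc : IsClosed {x : Fin d → ℝ | (n : ℝ) ≤ ∑ i, x i ∧ ∑ i, x i ≤ (n : ℝ)} := by
      rw [ofPred_and]
      exact (isClosed_le (by fun_prop) (by fun_prop)).inter
        (isClosed_le (by fun_prop) (by fun_prop))
    convert (isCompact_univ_pi (fun _ : Fin d => isCompact_Icc (a := (0 : ℝ)) (b := 1))).inter_right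
      hc using 1
    ext y
    simp only [hP, mem_ofPred_eq, mem_inter_iff, mem_univ_pi, mem_Icc]
  have hfin : {x | ∃ A : Finset (Fin d), A.card ∈ ({n} : Finset ℕ) ∧ x = eVec d A}.Finite := by
    refine (Set.finite_range (eVec d)).subset ?_
    rintro _ ⟨A, -, rfl⟩
    exact ⟨A, rfl⟩
  have hext : P.extremePoints ℝ ⊆
      {x | ∃ A : Finset (Fin d), A.card ∈ ({n} : Finset ℕ) ∧ x = eVec d A} := by
    intro y hy
    obtain ⟨⟨hy01, hyl, hyu⟩, hyext⟩ := hy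
    have hysum : ∑ i, y i = n := le_antisymm hyu hyl
    have hint : ∀ i, y i = 0 ∨ y i = 1 := by
      by_contra! hcon
      obtain ⟨i, hi0, hi1⟩ := hcon
      have hi0' := lt_of_le_of_ne (hy01 i).1 hi0.symm
      have hi1' := lt_of_le_of_ne (hy01 i).2 hi1
      obtain ⟨j, hji, hj0, hj1⟩ := exists_other_fractional hysum hi0' hi1'
      have hj0' := lt_of_le_of_ne (hy01 j).1 hj0.symm
      have hj1' := lt_of_le_of_ne (hy01 j).2 hj1
      obtain ⟨ε, hε, hε'⟩ := exists_between
        (show 0 < min (min (y i) (1 - y i)) (min (y j) (1 - y j)) by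
          simp only [lt_min_iff]; refine ⟨⟨?_, ?_⟩, ?_, ?_⟩ <;> linarith)
      simp only [lt_min_iff] at hε'
      obtain ⟨⟨e1, e2⟩, e3, e4⟩ := hε'
      set v : Fin d → ℝ := Pi.single i 1 - Pi.single j 1 with hv
      have hvi : v i = 1 := by simp [hv, hji.symm]
      have hvj : v j = -1 := by simp [hv, hji]
      have hvk : ∀ k, k ≠ i → k ≠ j → v k = 0 := fun k h1 h2 => by simp [hv, h1, h2]
      have hvs : ∑ k, v k = 0 := by simp [hv]
      have key : ∀ t : ℝ, |t| ≤ ε → y + t • v ∈ P := by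
        intro t ht
        obtain ⟨t1, t2⟩ := abs_le.mp ht
        have hs : ∑ k, (y + t • v) k = n := by
          simp [Finset.sum_add_distrib, ← Finset.mul_sum, hvs, hysum]
        refine ⟨fun k => ?_, hs.ge, hs.le⟩
        simp only [Pi.add_apply, Pi.smul_apply, smul_eq_mul]
        by_cases hki : k = i
        · subst hki; rw [hvi]; constructor <;> linarith
        by_cases hkj : k = j
        · subst hkj; rw [hvj]; constructor <;> linarith
        rw [hvk k hki hkj]
        simpa using hy01 k
      have hmem : y ∈ openSegment ℝ (y + ε • v) (y + (-ε) • v) :=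
        ⟨1 / 2, 1 / 2, by norm_num, by norm_num, by norm_num, by
          ext k; simp only [Pi.add_apply, Pi.smul_apply, smul_eq_mul]; ring⟩
      have heq := hyext (key ε (abs_of_pos hε).le)
        (key (-ε) (by rw [abs_neg]; exact (abs_of_pos hε).le)) hmem
      have := congrFun heq i
      simp only [Pi.add_apply, Pi.smul_apply, smul_eq_mul, hvi] at this
      linarith
    have hyA : y = eVec d (Finset.univ.filter (fun i => y i = 1)) := by
      ext i
      rcases hint i with h | h <;> simp [eVec, h]
    refine ⟨_, ?_, hyA⟩
    rw [hyA, sum_eVec] at hysum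
    rw [Finset.mem_singleton]
    exact_mod_cast hysum
  have hxP : x ∈ P := ⟨hx, hsum.ge, hsum.le⟩
  rw [← closure_convexHull_extremePoints hcomp hconv] at hxP
  exact closure_minimal (convexHull_mono hext) (hfin.isClosed_convexHull ℝ) hxP

/-- If no element of `S` lies strictly between `p` and `q`, then the part of `Δ(d,S)` between the
levels `p` and `q` lies in `Δ(d,p,q)`. -/
lemma mem_Shyp_pair {d p q : ℕ} (hpq : p < q) {S : Finset ℕ}
    (hS : ∀ n ∈ S, n ≤ p ∨ q ≤ n) {x : Fin d → ℝ} (hx : x ∈ Shyp d S)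
    (hpx : (p : ℝ) ≤ ∑ i, x i) (hxq : ∑ i, x i ≤ (q : ℝ)) : x ∈ Shyp d {p, q} := by
  have hp_sub : Shyp d {p} ⊆ Shyp d {p, q} := Shyp_mono (by simp)
  have hq_sub : Shyp d {q} ⊆ Shyp d {p, q} := Shyp_mono (by simp)
  have hx01 : ∀ i, 0 ≤ x i ∧ x i ≤ 1 :=
    (Shyp_subset_slab (a := 0) (b := S.sup id)
      (fun n hn => ⟨n.zero_le, Finset.le_sup (f := id) hn⟩) hx).1
  set L : Set (Fin d → ℝ) := {x | ∃ A : Finset (Fin d), A.card ≤ p ∧ x = eVec d A}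
  set U : Set (Fin d → ℝ) := {x | ∃ A : Finset (Fin d), q ≤ A.card ∧ x = eVec d A}
  have hL : convexHull ℝ L ⊆ {x : Fin d → ℝ | (∀ i, 0 ≤ x i ∧ x i ≤ 1) ∧
      (0 : ℝ) ≤ ∑ i, x i ∧ ∑ i, x i ≤ (p : ℝ)} := by
    apply hull_subset_slab
    rintro _ ⟨A, hA, rfl⟩
    exact ⟨A, rfl, by positivity, by exact_mod_cast hA⟩
  have hU : convexHull ℝ U ⊆ {x : Fin d → ℝ | (∀ i, 0 ≤ x i ∧ x i ≤ 1) ∧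
      (q : ℝ) ≤ ∑ i, x i ∧ ∑ i, x i ≤ (d : ℝ)} := by
    apply hull_subset_slab
    rintro _ ⟨A, hA, rfl⟩
    exact ⟨A, rfl, by exact_mod_cast hA, by exact_mod_cast card_finset_fin_le A⟩
  have hxLU : x ∈ convexHull ℝ (L ∪ U) := by
    refine convexHull_mono ?_ hx
    rintro _ ⟨A, hA, rfl⟩
    exact (hS _ hA).imp (fun h => ⟨A, h, rfl⟩) (fun h => ⟨A, h, rfl⟩)
  rcases L.eq_empty_or_nonempty with hLe | hLne
  · rw [hLe, empty_union] at hxLU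
    exact hq_sub (slice_subset_Shyp hx01 (le_antisymm hxq (hU hxLU).2.1))
  rcases U.eq_empty_or_nonempty with hUe | hUne
  · rw [hUe, union_empty] at hxLU
    exact hp_sub (slice_subset_Shyp hx01 (le_antisymm (hL hxLU).2.2 hpx))
  rw [convexHull_union hLne hUne, mem_convexJoin] at hxLU
  obtain ⟨y, hy, z, hz, a, b, ha, hb, hab, rfl⟩ := hxLU
  obtain ⟨hy01, -, hyp⟩ := hL hy
  obtain ⟨hz01, hqz, -⟩ := hU hz
  have hpq' : (p : ℝ) < q := by exact_mod_cast hpq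
  obtain rfl : a = 1 - b := by linarith
  have hsum : ∀ r : ℝ, ∑ i, ((1 - r) • y + r • z) i =
      ∑ i, y i + r * (∑ i, z i - ∑ i, y i) := by
    intro r
    simp only [Pi.add_apply, Pi.smul_apply, smul_eq_mul, Finset.sum_add_distrib,
      ← Finset.mul_sum]
    ring
  rw [hsum] at hpx hxq
  set Y := ∑ i, y i
  set Z := ∑ i, z i
  have hD : 0 < Z - Y := by linarith
  -- The parameters at which the segment from `y` to `z` crosses the levels `p` and `q`.
  obtain ⟨t, ht⟩ : ∃ t : ℝ, t * (Z - Y) = p - Y := ⟨(p - Y) / (Z - Y), by field_simp⟩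
  obtain ⟨u, hu⟩ : ∃ u : ℝ, u * (Z - Y) = q - Y := ⟨(q - Y) / (Z - Y), by field_simp⟩
  have ht0 : 0 ≤ t := by by_contra! h; nlinarith
  have htb : t ≤ b := by by_contra! h; nlinarith
  have hbu : b ≤ u := by by_contra! h; nlinarith
  have hu1 : u ≤ 1 := by by_contra! h; nlinarith
  have htu : 0 < u - t := by by_contra! h; nlinarith
  have hcube : ∀ r : ℝ, 0 ≤ r → r ≤ 1 → ∀ i, 0 ≤ ((1 - r) • y + r • z) i ∧
      ((1 - r) • y + r • z) i ≤ 1 := by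
    intro r h0 h1 i
    have h2 := hy01 i
    have h3 := hz01 i
    simp only [Pi.add_apply, Pi.smul_apply, smul_eq_mul]
    constructor <;> nlinarith
  have hy' : (1 - t) • y + t • z ∈ Shyp d {p} :=
    slice_subset_Shyp (hcube t ht0 (by linarith)) (by rw [hsum, ht]; ring)
  have hz' : (1 - u) • y + u • z ∈ Shyp d {q} :=
    slice_subset_Shyp (hcube u (by linarith) hu1) (by rw [hsum, hu]; ring)
  have hc := (convex_convexHull ℝ _ : Convex ℝ (Shyp d {p, q})) (hp_sub hy') (hq_sub hz')
    (div_nonneg (sub_nonneg.2 hbu) htu.le) (div_nonneg (sub_nonneg.2 htb) htu.le)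
    (by field_simp; ring)
  refine Set.mem_of_eq_of_mem ?_ hc
  ext i
  simp only [Pi.add_apply, Pi.smul_apply, smul_eq_mul]
  field_simp
  ring

lemma exists_consecutive (s : ℕ → ℕ) (x : ℝ) (n : ℕ) (h0 : (s 0 : ℝ) ≤ x)
    (hn : x ≤ s (n + 1)) : ∃ m ≤ n, (s m : ℝ) ≤ x ∧ x ≤ s (m + 1) := by
  induction n with
  | zero => exact ⟨0, le_rfl, h0, hn⟩
  | succ n ih =>
    by_cases h : x ≤ s (n + 1)
    · obtain ⟨m, hm, h'⟩ := ih h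
      exact ⟨m, by omega, h'⟩
    · exact ⟨n + 1, le_rfl, (not_le.1 h).le, hn⟩

/-- `Δ(d,S)` decomposes as the union of the Cayley polytopes
`Δ(d,s_i,s_{i+1})`, and consecutive pieces meet in a hypersimplex while
non-consecutive pieces are disjoint. -/
theorem decomp_Shyp (d k : ℕ) (hd : 1 ≤ d) (hk : 2 ≤ k) (s : ℕ → ℕ)
    (hmono : ∀ i, i + 1 < k → s i < s (i + 1)) (hsd : ∀ i, i < k → s i ≤ d) :
    (Shyp d ((Finset.range k).image s) =
      ⋃ i ∈ Finset.range (k - 1), Shyp d {s i, s (i + 1)}) ∧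
    (∀ i j : ℕ, i < j → j < k - 1 →
      Shyp d {s i, s (i + 1)} ∩ Shyp d {s j, s (j + 1)} =
        if j = i + 1 then Shyp d {s j} else ∅) := by
  have hle : ∀ i j, i ≤ j → j < k → s i ≤ s j := by
    intro i j hij
    induction j, hij using Nat.le_induction with
    | base => exact fun _ => le_rfl
    | succ j _ ih => exact fun hj => (ih (by omega)).trans (hmono j hj).le
  have hslab : ∀ i, i + 1 < k → ∀ x ∈ Shyp d {s i, s (i + 1)},
      (∀ l, 0 ≤ x l ∧ x l ≤ 1) ∧ (s i : ℝ) ≤ ∑ l, x l ∧ ∑ l, x l ≤ (s (i + 1) : ℝ) := by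
    intro i hi x hx
    have := hmono i hi
    refine Shyp_subset_slab ?_ hx
    simp only [Finset.mem_insert, Finset.mem_singleton]
    omega
  constructor
  · apply Subset.antisymm
    · intro x hx
      have hb := Shyp_subset_slab (a := s 0) (b := s (k - 1)) (by
        intro n hn
        obtain ⟨i, hi, rfl⟩ := Finset.mem_image.1 hn
        rw [Finset.mem_range] at hi
        exact ⟨hle 0 i (by omega) hi, hle i (k - 1) (by omega) (by omega)⟩) hx
      obtain ⟨-, hb0, hb1⟩ := hb
      obtain ⟨m, hm, h1, h2⟩ := exists_consecutive s _ (k - 2) hb0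
        (by rwa [show k - 2 + 1 = k - 1 by omega])
      refine mem_iUnion₂.2 ⟨m, Finset.mem_range.2 (by omega), ?_⟩
      refine mem_Shyp_pair (hmono m (by omega)) ?_ hx h1 h2
      intro n hn
      obtain ⟨i, hi, rfl⟩ := Finset.mem_image.1 hn
      rw [Finset.mem_range] at hi
      rcases Nat.lt_or_ge m i with h | h
      · exact Or.inr (hle _ _ h hi)
      · exact Or.inl (hle _ _ h (by omega))
    · refine iUnion₂_subset fun i hi => Shyp_mono ?_
      rw [Finset.mem_range] at hi
      intro n hn
      simp only [Finset.mem_insert, Finset.mem_singleton] at hn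
      rw [Finset.mem_image]
      rcases hn with rfl | rfl
      · exact ⟨i, Finset.mem_range.2 (by omega), rfl⟩
      · exact ⟨i + 1, Finset.mem_range.2 (by omega), rfl⟩
  · intro i j hij hj
    split_ifs with h
    · subst h
      apply Subset.antisymm
      · rintro x ⟨hx1, hx2⟩
        obtain ⟨h01, -, hu⟩ := hslab i (by omega) x hx1
        obtain ⟨-, hl, -⟩ := hslab (i + 1) (by omega) x hx2
        exact slice_subset_Shyp h01 (le_antisymm hu hl)
      · exact subset_inter (Shyp_mono (by simp)) (Shyp_mono (by simp))
    · rw [Set.eq_empty_iff_forall_notMem]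
      rintro x ⟨hx1, hx2⟩
      obtain ⟨-, -, hu⟩ := hslab i (by omega) x hx1
      obtain ⟨-, hl, -⟩ := hslab j (by omega) x hx2
      have h1 : s (i + 1) < s j :=
        (hmono (i + 1) (by omega)).trans_le (hle (i + 2) j (by omega) (by omega))
      have h2 : (s (i + 1) : ℝ) < s j := by exact_mod_cast h1
      linarith
end
end

section
/- Let p, q ∈ ℝ^d both have weakly decreasing coordinates (p_1 ≥ p_2 ≥ ⋯ ≥ p_d and q_1 ≥ q_2 ≥ ⋯ ≥ q_d). Then the Minkowski sum of the permutahedra Π(p) and Π(q) equals the permutahedron of the sum: Π(p) + Π(q) = Π(p + q). -/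
/-!
If a sum `p ∘ σ + q ∘ τ` of generators lay outside `Π(p + q)`, some linear functional `c` would
strictly separate it from `Π(p + q)`. Both `p` and `q` are weakly decreasing, so a single permutation
`ρ⁻¹`, where `c ∘ ρ` is weakly decreasing, maximizes `c` over the generators of `Π(p)` and of `Π(q)`
simultaneously (the rearrangement inequality, `sum_mul_comp_perm_le_of_antitone`). Hence the value of
`c` at `p ∘ σ + q ∘ τ` is at most its value at the generator `(p + q) ∘ ρ⁻¹`, a contradiction. The
reverse inclusion is immediate, because every generator of `Π(p + q)` is a sum of generators.
-/

open Set Pointwise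

noncomputable section

/-- Among the rearrangements of a weakly decreasing vector `p`, the one ordered like `c` has the
largest pairing with `c`; the maximizer `ρ⁻¹` depends only on `c`. -/
theorem sum_mul_comp_perm_le_of_antitone {d : ℕ} {p c : Fin d → ℝ} (hp : Antitone p)
    (ρ : Equiv.Perm (Fin d)) (hc : Antitone (c ∘ ρ)) (σ : Equiv.Perm (Fin d)) :
    ∑ i, p (σ i) * c i ≤ ∑ i, p (ρ.symm i) * c i := by
  have h := (hp.monovary hc).sum_comp_perm_mul_le_sum_mul (σ := ρ.trans σ)
  rw [← Equiv.sum_comp ρ (fun i => p (σ i) * c i),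
    ← Equiv.sum_comp ρ (fun i => p (ρ.symm i) * c i)]
  simpa using h

/-- for weakly decreasing `p` and `q`, the Minkowski sum of the
permutahedra `Π(p)` and `Π(q)` is the permutahedron `Π(p+q)`. -/
theorem permPoly_add (d : ℕ) (p q : Fin d → ℝ)
    (hp : ∀ i j : Fin d, i ≤ j → p j ≤ p i) (hq : ∀ i j : Fin d, i ≤ j → q j ≤ q i) :
    permPoly d p + permPoly d q = permPoly d (p + q) := by
  have hp' : Antitone p := fun i j h => hp i j h
  have hq' : Antitone q := fun i j h => hq i j h
  apply Set.Subset.antisymm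
  · unfold permPoly
    rw [← convexHull_add]
    refine convexHull_min ?_ (convex_convexHull ℝ _)
    rintro _ ⟨_, ⟨σ, rfl⟩, _, ⟨τ, rfl⟩, rfl⟩
    by_contra hx
    have hfin : {x : Fin d → ℝ | ∃ σ : Equiv.Perm (Fin d), x = fun i => (p + q) (σ i)}.Finite := by
      refine (Set.finite_range
        fun (σ : Equiv.Perm (Fin d)) (i : Fin d) => (p + q) (σ i)).subset ?_
      rintro _ ⟨σ, rfl⟩
      exact ⟨σ, rfl⟩
    obtain ⟨f, u, hfu, hux⟩ := geometric_hahn_banach_closed_point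
      (convex_convexHull ℝ _) (Set.Finite.isClosed_convexHull ℝ hfin) hx
    -- The coordinates of `f` with respect to the standard basis.
    obtain ⟨c, hc⟩ : ∃ c : Fin d → ℝ, ∀ x, f x = ∑ i, x i * c i :=
      ⟨_, fun x => LinearMap.pi_apply_eq_sum_univ f.toLinearMap x⟩
    -- Sorting `-c` increasingly sorts `c` decreasingly.
    let ρ : Equiv.Perm (Fin d) := Tuple.sort fun i => -c i
    have hρ : Antitone (c ∘ ρ) := fun i j hij =>
      neg_le_neg_iff.mp (Tuple.monotone_sort (fun i => -c i) hij)
    have h := hfu _ (subset_convexHull ℝ _ ⟨ρ.symm, rfl⟩)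
    have h1 := sum_mul_comp_perm_le_of_antitone hp' ρ hρ σ
    have h2 := sum_mul_comp_perm_le_of_antitone hq' ρ hρ τ
    rw [hc] at h hux
    simp only [Pi.add_apply, add_mul, Finset.sum_add_distrib] at h hux
    linarith
  · refine convexHull_min ?_ ((convex_convexHull ℝ _).add (convex_convexHull ℝ _))
    rintro _ ⟨σ, rfl⟩
    exact ⟨_, subset_convexHull ℝ _ ⟨σ, rfl⟩, _, subset_convexHull ℝ _ ⟨σ, rfl⟩, rfl⟩
end
end

section
/- Let 0 ≤ k < l ≤ d. Then Δ(d,k,l) ∩ {x ∈ ℝ^d : x_1 + ⋯ + x_d = (k+l)/2} = (1/2)(Δ(d,k) + Δ(d,l)), where the right-hand side is the set {(y+z)/2 : y ∈ Δ(d,k), z ∈ Δ(d,l)}. -/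
/-!
`Δ(d,k,l)` is the convex hull of a union of two nonempty vertex sets, so each of its points lies on
a segment `[y, z]` with `y ∈ Δ(d,k)` and `z ∈ Δ(d,l)` (`Shyp_pair`). The coordinate sum is constant
equal to `k` on `Δ(d,k)` and to `l` on `Δ(d,l)` (`sum_eq_of_mem_Shyp`), and `k ≠ l`, so a point of
`[y, z]` has coordinate sum `(k + l) / 2` exactly when it is the midpoint.
-/

open Set Pointwise

noncomputable section

theorem sum_eq_of_mem_Shyp {d k : ℕ} {x : Fin d → ℝ} (hx : x ∈ Shyp d {k}) :
    ∑ i, x i = k := by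
  have hconv : Convex ℝ {x : Fin d → ℝ | ∑ i, x i = (k : ℝ)} := by
    intro x hx y hy a b _ _ hab
    simp only [mem_setOf_eq] at hx hy ⊢
    simp only [Pi.add_apply, Pi.smul_apply, smul_eq_mul, Finset.sum_add_distrib,
      ← Finset.mul_sum, hx, hy, ← add_mul, hab, one_mul]
  refine convexHull_min ?_ hconv hx
  rintro _ ⟨A, hA, rfl⟩
  simpa [eVec] using hA

theorem vertices_nonempty {d k : ℕ} (hk : k ≤ d) :
    {x | ∃ A : Finset (Fin d), A.card ∈ ({k} : Finset ℕ) ∧ x = eVec d A}.Nonempty := by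
  obtain ⟨A, -, hA⟩ := Finset.exists_subset_card_eq
    (s := (Finset.univ : Finset (Fin d))) (n := k) (by simpa using hk)
  exact ⟨eVec d A, A, by simp [hA], rfl⟩

theorem Shyp_pair {d k l : ℕ} (hk : k ≤ d) (hl : l ≤ d) :
    Shyp d {k, l} = convexJoin ℝ (Shyp d {k}) (Shyp d {l}) := by
  unfold Shyp
  rw [← convexHull_union (vertices_nonempty hk) (vertices_nonempty hl)]
  congr 1
  ext x
  simp only [Finset.mem_insert, Finset.mem_singleton, mem_union, mem_setOf_eq, or_and_right,
    exists_or]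

/-- the middle slice of the Cayley polytope `Δ(d,k,l)` is
`(1/2)(Δ(d,k) + Δ(d,l))`. -/
theorem middle_slice_cayley (d k l : ℕ) (hkl : k < l) (hld : l ≤ d) :
    Shyp d {k, l} ∩ {x : Fin d → ℝ | ∑ i, x i = ((k : ℝ) + l) / 2} =
      {x : Fin d → ℝ | ∃ y ∈ Shyp d {k}, ∃ z ∈ Shyp d {l}, x = (1 / 2 : ℝ) • (y + z)} := by
  rw [Shyp_pair (hkl.le.trans hld) hld]
  ext x
  simp only [mem_inter_iff, mem_convexJoin, mem_setOf_eq]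
  constructor
  · rintro ⟨⟨y, hy, z, hz, a, b, -, -, hab, rfl⟩, hsum⟩
    refine ⟨y, hy, z, hz, ?_⟩
    simp only [Pi.add_apply, Pi.smul_apply, smul_eq_mul, Finset.sum_add_distrib,
      ← Finset.mul_sum, sum_eq_of_mem_Shyp hy, sum_eq_of_mem_Shyp hz] at hsum
    have hlk : (l : ℝ) - k ≠ 0 := sub_ne_zero.mpr (by exact_mod_cast hkl.ne')
    have hb : b = 1 / 2 := by
      apply mul_right_cancel₀ hlk
      linear_combination hsum - k * hab
    have ha : a = 1 / 2 := by linarith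
    rw [ha, hb, smul_add]
  · rintro ⟨y, hy, z, hz, rfl⟩
    refine ⟨⟨y, hy, z, hz, 1 / 2, 1 / 2, by norm_num, by norm_num, by norm_num,
      (smul_add _ _ _).symm⟩, ?_⟩
    simp only [Pi.add_apply, Pi.smul_apply, smul_eq_mul, Finset.sum_add_distrib,
      ← Finset.mul_sum, sum_eq_of_mem_Shyp hy, sum_eq_of_mem_Shyp hz]
    ring
end
end

section
/- Let 1 ≤ k < l < d, let I ⊂ [d] with k < h := |I| < l, and set c = (l−h)e_I − (h−k)e_{I^c} ∈ ℝ^d. Then (a) max{⟨c,x⟩ : x ∈ Δ(d,k,l)} = (l−h)k; (b) for A ⊆ [d] with |A| = k one has ⟨c,e_A⟩ = (l−h)k if and only if A ⊆ I, and for A ⊆ [d] with |A| = l one has ⟨c,e_A⟩ = (l−h)k if and only if I ⊆ A; (c) the face of Δ(d,k,l) in direction c equals the convex hull of {e_A : A ⊆ I, |A| = k} ∪ {e_A : I ⊆ A ⊆ [d], |A| = l}, and this face has dimension d−1, i.e., it is a facet of Δ(d,k,l). -/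
/-!
Write `h = |I|`. For a vertex `e_A` with `a = |A ∩ I|`, the value of `c` is
`(l - h) a - (h - k) (|A| - a) = (l - k) a - (h - k) |A|` (`weight_eVec`), which is strictly
increasing in `a`. When `|A| = k` it is therefore largest exactly when `a = k`, i.e. `A ⊆ I`; when
`|A| = l`, exactly when `a = h`, i.e. `I ⊆ A`; both largest values equal `(l - h) k`. The face of a
convex hull where a linear function is maximal is the hull of the maximizing generators
(`mem_convexHull_maximizers`), which gives the description of the face.

For the dimension, `finrank_vectorSpan_maximizers` computes the annihilator of the directions of
the face. A functional `b` that is constant on the maximizing vertices satisfies `b i = b j` for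
`i, j ∈ I` (exchange `i` and `j` in a `k`-subset of `I`) and for `i, j ∉ I` (exchange them in an
`l`-set containing `I`), so it takes only two values `α` on `I` and `β` off `I`. Comparing a vertex
of each kind gives `k α = h α + (l - h) β`, so `b` is a multiple of `c`. The annihilator is thus the
line spanned by `c`, and the face has dimension `d - 1`.
-/

open Set Pointwise

noncomputable section

/-- The linear functional `x ↦ ⟨c, x⟩` on `ℝ^d`. -/
def pairing (d : ℕ) (c : Fin d → ℝ) : (Fin d → ℝ) →ₗ[ℝ] ℝ := ∑ i, c i • LinearMap.proj i

lemma pairing_apply (d : ℕ) (c x : Fin d → ℝ) : pairing d c x = ∑ i, c i * x i := by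
  simp [pairing]

/-- The direction `c = (l - h) e_I - (h - k) e_{I^c}` with `h = |I|`. -/
def weight (d k l : ℕ) (I : Finset (Fin d)) : Fin d → ℝ :=
  fun i => if i ∈ I then (l : ℝ) - I.card else -((I.card : ℝ) - k)

/-- The vertices `e_A` with `A ⊆ I`, `|A| = k`, or `I ⊆ A`, `|A| = l`. -/
def maximizers (d k l : ℕ) (I : Finset (Fin d)) : Set (Fin d → ℝ) :=
  {x | ∃ A : Finset (Fin d), A ⊆ I ∧ A.card = k ∧ x = eVec d A} ∪
    {x | ∃ A : Finset (Fin d), I ⊆ A ∧ A.card = l ∧ x = eVec d A}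

/-- If a linear function is at most `m` on `V`, then every point of the hull of `V` where it is at
least `m` lies in the hull of the points of `V` where it equals `m`. -/
lemma mem_convexHull_maximizers {E : Type*} [AddCommGroup E] [Module ℝ E] (f : E →ₗ[ℝ] ℝ)
    (V : Set E) (m : ℝ) (hV : ∀ v ∈ V, f v ≤ m) {x : E} (hx : x ∈ convexHull ℝ V) :
    f x ≤ m ∧ (m ≤ f x → x ∈ convexHull ℝ {v ∈ V | f v = m}) := by
  -- The points with the claimed property form a convex set containing `V`: a proper convex
  -- combination reaches the value `m` only if both of its end points do.
  suffices h : convexHull ℝ V ⊆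
      {x | f x ≤ m ∧ (m ≤ f x → x ∈ convexHull ℝ {v ∈ V | f v = m})} from h hx
  refine convexHull_min (fun v hv => ⟨hV v hv, fun h =>
    subset_convexHull ℝ _ ⟨hv, le_antisymm (hV v hv) h⟩⟩) ?_
  rw [convex_iff_forall_pos]
  rintro x ⟨hx1, hx2⟩ y ⟨hy1, hy2⟩ a b ha hb hab
  have h1 : a * f x ≤ a * m := mul_le_mul_of_nonneg_left hx1 ha.le
  have h2 : b * f y ≤ b * m := mul_le_mul_of_nonneg_left hy1 hb.le
  have h3 : a * m + b * m = m := by rw [← add_mul, hab, one_mul]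
  have h4 : f (a • x + b • y) = a * f x + b * f y := by simp
  refine ⟨by linarith, fun h => ?_⟩
  rw [h4] at h
  have h5 : m ≤ f x := le_of_mul_le_mul_left (by linarith) ha
  have h6 : m ≤ f y := le_of_mul_le_mul_left (by linarith) hb
  exact convex_convexHull ℝ _ (hx2 h5) (hy2 h6) ha.le hb.le hab

lemma weight_eVec (d k l : ℕ) (I A : Finset (Fin d)) :
    ∑ i, weight d k l I i * eVec d A i =
      ((l : ℝ) - k) * (A ∩ I).card - ((I.card : ℝ) - k) * A.card := by
  have h1 : ∀ i, weight d k l I i * eVec d A i =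
      ((l : ℝ) - k) * (if i ∈ A ∩ I then 1 else 0) -
        ((I.card : ℝ) - k) * (if i ∈ A then 1 else 0) := by
    intro i
    by_cases hI : i ∈ I <;> by_cases hA : i ∈ A <;> simp [weight, eVec, hI, hA]
  simp only [h1, Finset.sum_sub_distrib, ← Finset.mul_sum, Finset.sum_boole,
    Finset.filter_mem_eq_inter, Finset.univ_inter]

lemma weight_eVec_small {d k l : ℕ} (hkl : k < l) (I A : Finset (Fin d)) (hA : A.card = k) :
    ∑ i, weight d k l I i * eVec d A i ≤ ((l : ℝ) - I.card) * k ∧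
      (∑ i, weight d k l I i * eVec d A i = ((l : ℝ) - I.card) * k ↔ A ⊆ I) := by
  have hkl' : (0 : ℝ) < (l : ℝ) - k := sub_pos.2 (by exact_mod_cast hkl)
  have hle : ((A ∩ I).card : ℝ) ≤ k := by
    exact_mod_cast hA ▸ Finset.card_le_card (Finset.inter_subset_left (s₁ := A) (s₂ := I))
  rw [weight_eVec, hA]
  refine ⟨by nlinarith, fun h => ?_, fun h => ?_⟩
  · have h1 : ((l : ℝ) - k) * (A ∩ I).card = ((l : ℝ) - k) * k := by linarith
    have h2 : (A ∩ I).card = k := by exact_mod_cast mul_left_cancel₀ hkl'.ne' h1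
    exact Finset.inter_eq_left.1
      (Finset.eq_of_subset_of_card_le Finset.inter_subset_left (by omega))
  · rw [Finset.inter_eq_left.2 h, hA]; ring

lemma weight_eVec_large {d k l : ℕ} (hkl : k < l) (I A : Finset (Fin d)) (hA : A.card = l) :
    ∑ i, weight d k l I i * eVec d A i ≤ ((l : ℝ) - I.card) * k ∧
      (∑ i, weight d k l I i * eVec d A i = ((l : ℝ) - I.card) * k ↔ I ⊆ A) := by
  have hkl' : (0 : ℝ) < (l : ℝ) - k := sub_pos.2 (by exact_mod_cast hkl)
  have hle : ((A ∩ I).card : ℝ) ≤ I.card := by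
    exact_mod_cast Finset.card_le_card (Finset.inter_subset_right (s₁ := A) (s₂ := I))
  rw [weight_eVec, hA]
  refine ⟨by nlinarith, fun h => ?_, fun h => ?_⟩
  · have h1 : ((l : ℝ) - k) * (A ∩ I).card = ((l : ℝ) - k) * I.card := by linarith
    have h2 : (A ∩ I).card = I.card := by exact_mod_cast mul_left_cancel₀ hkl'.ne' h1
    exact Finset.inter_eq_right.1
      (Finset.eq_of_subset_of_card_le Finset.inter_subset_right (by omega))
  · rw [Finset.inter_eq_right.2 h]; ring

lemma weight_le {d k l : ℕ} (hkl : k < l) (I A : Finset (Fin d))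
    (hA : A.card ∈ ({k, l} : Finset ℕ)) :
    ∑ i, weight d k l I i * eVec d A i ≤ ((l : ℝ) - I.card) * k := by
  rcases Finset.mem_insert.1 hA with h | h
  · exact (weight_eVec_small hkl I A h).1
  · exact (weight_eVec_large hkl I A (Finset.mem_singleton.1 h)).1

lemma maximizers_eq {d k l : ℕ} (hkl : k < l) (I : Finset (Fin d)) :
    {v ∈ {x | ∃ A : Finset (Fin d), A.card ∈ ({k, l} : Finset ℕ) ∧ x = eVec d A} |
      pairing d (weight d k l I) v = ((l : ℝ) - I.card) * k} = maximizers d k l I := by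
  ext x
  constructor
  · rintro ⟨⟨A, hA, rfl⟩, hx⟩
    rw [pairing_apply] at hx
    rcases Finset.mem_insert.1 hA with h | h
    · exact Or.inl ⟨A, (weight_eVec_small hkl I A h).2.1 hx, h, rfl⟩
    · have h := Finset.mem_singleton.1 h
      exact Or.inr ⟨A, (weight_eVec_large hkl I A h).2.1 hx, h, rfl⟩
  · rintro (⟨A, hI, h, rfl⟩ | ⟨A, hI, h, rfl⟩)
    · exact ⟨⟨A, by simp [h], rfl⟩, by
        rw [pairing_apply]; exact (weight_eVec_small hkl I A h).2.2 hI⟩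
    · exact ⟨⟨A, by simp [h], rfl⟩, by
        rw [pairing_apply]; exact (weight_eVec_large hkl I A h).2.2 hI⟩

lemma dual_eVec {d : ℕ} (g : Module.Dual ℝ (Fin d → ℝ)) (A : Finset (Fin d)) :
    g (eVec d A) = ∑ i ∈ A, g (Pi.single i 1) := by
  have h : eVec d A = ∑ i ∈ A, Pi.single i (1 : ℝ) := by
    ext j
    simp [eVec, Finset.sum_apply, Pi.single_apply]
  rw [h, map_sum]

/-- The exchange argument: a functional constant on the maximizing vertices has equal coordinates at
two indices on the same side of `I`. -/
lemma dual_exchange {d k l : ℕ} (hk : 1 ≤ k) (hld : l < d) (I : Finset (Fin d))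
    (hkI : k < I.card) (hIl : I.card < l) (g : Module.Dual ℝ (Fin d → ℝ))
    (hg : ∀ x ∈ maximizers d k l I, ∀ y ∈ maximizers d k l I, g x = g y)
    (i j : Fin d) (hij : i ∈ I ↔ j ∈ I) : g (Pi.single i 1) = g (Pi.single j 1) := by
  by_cases hne : i = j
  · rw [hne]
  -- It suffices to find `T` avoiding `i`, `j` such that adding either yields a maximizing vertex.
  suffices h : ∃ T : Finset (Fin d), i ∉ T ∧ j ∉ T ∧ eVec d (insert i T) ∈ maximizers d k l I ∧
      eVec d (insert j T) ∈ maximizers d k l I by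
    obtain ⟨T, hi, hj, h1, h2⟩ := h
    have h3 := hg _ h1 _ h2
    rw [dual_eVec, dual_eVec, Finset.sum_insert hi, Finset.sum_insert hj] at h3
    exact add_right_cancel h3
  by_cases hi : i ∈ I
  · have hj := hij.1 hi
    have hc : ((I.erase i).erase j).card = I.card - 1 - 1 := by
      rw [Finset.card_erase_of_mem (by simp [hj, Ne.symm hne]), Finset.card_erase_of_mem hi]
    obtain ⟨T, hT, hTc⟩ := Finset.exists_subset_card_eq
      (s := (I.erase i).erase j) (n := k - 1) (by omega)
    have hiT : i ∉ T := fun h => by simpa using hT h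
    have hjT : j ∉ T := fun h => by simpa using hT h
    have hTI : T ⊆ I := fun x hx => Finset.mem_of_mem_erase (Finset.mem_of_mem_erase (hT hx))
    refine ⟨T, hiT, hjT, Or.inl ⟨_, Finset.insert_subset hi hTI, ?_, rfl⟩,
      Or.inl ⟨_, Finset.insert_subset hj hTI, ?_, rfl⟩⟩
    · rw [Finset.card_insert_of_notMem hiT]; omega
    · rw [Finset.card_insert_of_notMem hjT]; omega
  · have hj : j ∉ I := fun h => hi (hij.2 h)
    have hc : (((Finset.univ : Finset (Fin d)).erase i).erase j).card = d - 1 - 1 := by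
      rw [Finset.card_erase_of_mem (by simp [Ne.symm hne]),
        Finset.card_erase_of_mem (Finset.mem_univ i), Finset.card_univ, Fintype.card_fin]
    obtain ⟨T, hIT, hT, hTc⟩ := Finset.exists_subsuperset_card_eq
      (s := I) (t := ((Finset.univ : Finset (Fin d)).erase i).erase j) (n := l - 1)
      (fun x hx => by
        simp only [Finset.mem_erase, Finset.mem_univ, and_true]
        exact ⟨fun h => hj (h ▸ hx), fun h => hi (h ▸ hx)⟩) (by omega) (by omega)
    have hiT : i ∉ T := fun h => by simpa using hT h
    have hjT : j ∉ T := fun h => by simpa using hT h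
    refine ⟨T, hiT, hjT, Or.inr ⟨_, hIT.trans (Finset.subset_insert _ _), ?_, rfl⟩,
      Or.inr ⟨_, hIT.trans (Finset.subset_insert _ _), ?_, rfl⟩⟩
    · rw [Finset.card_insert_of_notMem hiT]; omega
    · rw [Finset.card_insert_of_notMem hjT]; omega

/-- A functional constant on the maximizing vertices is a multiple of `⟨c, ·⟩`. -/
lemma dual_mem_span {d k l : ℕ} (hk : 1 ≤ k) (hld : l < d) (I : Finset (Fin d))
    (hkI : k < I.card) (hIl : I.card < l) (g : Module.Dual ℝ (Fin d → ℝ))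
    (hg : ∀ x ∈ maximizers d k l I, ∀ y ∈ maximizers d k l I, g x = g y) :
    ∃ r : ℝ, r • pairing d (weight d k l I) = g := by
  obtain ⟨A, hAI, hA⟩ := Finset.exists_subset_card_eq hkI.le
  obtain ⟨B, hIB, -, hB⟩ := Finset.exists_subsuperset_card_eq (Finset.subset_univ I) hIl.le
    (by simpa using hld.le)
  obtain ⟨i₀, hi₀⟩ : I.Nonempty := Finset.card_pos.1 (by omega)
  obtain ⟨j₀, hj₀B, hj₀⟩ : ∃ j ∈ B, j ∉ I := Finset.exists_mem_notMem_of_card_lt_card (by omega)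
  have hex := dual_exchange hk hld I hkI hIl g hg
  have hα : ∀ i ∈ I, g (Pi.single i 1) = g (Pi.single i₀ 1) :=
    fun i hi => hex i i₀ (by simp [hi, hi₀])
  have hβ : ∀ i, i ∉ I → g (Pi.single i 1) = g (Pi.single j₀ 1) :=
    fun i hi => hex i j₀ (by simp [hi, hj₀])
  -- Comparing the two kinds of vertices relates the two values of the functional.
  have hrel : (k : ℝ) * g (Pi.single i₀ 1) =
      I.card * g (Pi.single i₀ 1) + ((l : ℝ) - I.card) * g (Pi.single j₀ 1) := by
    have h := hg _ (Or.inl ⟨A, hAI, hA, rfl⟩) _ (Or.inr ⟨B, hIB, hB, rfl⟩)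
    rw [dual_eVec, dual_eVec, ← Finset.sum_sdiff hIB, Finset.sum_congr rfl hα,
      Finset.sum_congr rfl (fun i hi => hα i (hAI hi)),
      Finset.sum_congr rfl (fun i hi => hβ i (Finset.mem_sdiff.1 hi).2)] at h
    simp only [Finset.sum_const, nsmul_eq_mul, Finset.card_sdiff_of_subset hIB, hA, hB,
      Nat.cast_sub hIl.le] at h
    linarith
  have hlh : (l : ℝ) - I.card ≠ 0 := (sub_pos.2 (by exact_mod_cast hIl)).ne'
  refine ⟨g (Pi.single i₀ 1) / ((l : ℝ) - I.card), LinearMap.pi_ext' fun i => ?_⟩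
  ext
  have hp : pairing d (weight d k l I) (Pi.single i 1) = weight d k l I i := by
    simp [pairing_apply, Pi.single_apply]
  simp only [LinearMap.comp_apply, LinearMap.smul_apply, LinearMap.single_apply, hp, smul_eq_mul]
  by_cases hi : i ∈ I
  · rw [hα i hi, weight, if_pos hi, div_mul_cancel₀ _ hlh]
  · rw [hβ i hi, weight, if_neg hi]
    field_simp
    linarith

lemma finrank_vectorSpan_maximizers {d k l : ℕ} (hk : 1 ≤ k) (hkl : k < l) (hld : l < d)
    (I : Finset (Fin d)) (hkI : k < I.card) (hIl : I.card < l) :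
    Module.finrank ℝ (vectorSpan ℝ (maximizers d k l I)) = d - 1 := by
  have hann : (vectorSpan ℝ (maximizers d k l I)).dualAnnihilator =
      Submodule.span ℝ {pairing d (weight d k l I)} := by
    ext g
    rw [Submodule.mem_span_singleton, Submodule.mem_dualAnnihilator]
    constructor
    · intro h
      refine dual_mem_span hk hld I hkI hIl g fun x hx y hy => ?_
      have := h _ (vsub_mem_vectorSpan ℝ hx hy)
      rwa [vsub_eq_sub, map_sub, sub_eq_zero] at this
    · rintro ⟨r, rfl⟩ w hw
      suffices h : vectorSpan ℝ (maximizers d k l I) ≤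
          LinearMap.ker (pairing d (weight d k l I)) by
        have h0 : pairing d (weight d k l I) w = 0 := h hw
        simp [h0]
      rw [vectorSpan_def, Submodule.span_le]
      rintro _ ⟨x, hx, y, hy, rfl⟩
      rw [← maximizers_eq hkl] at hx hy
      simp [hx.2, hy.2]
  have hne : pairing d (weight d k l I) ≠ 0 := by
    obtain ⟨i, hi⟩ : I.Nonempty := Finset.card_pos.1 (by omega)
    intro h
    have h1 : pairing d (weight d k l I) (Pi.single i 1) = 0 := by rw [h]; rfl
    have h2 : (l : ℝ) - I.card = 0 := by
      simpa [pairing_apply, Pi.single_apply, weight, hi] using h1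
    have h3 : (I.card : ℝ) < l := by exact_mod_cast hIl
    linarith
  have h := Subspace.finrank_add_finrank_dualAnnihilator_eq (vectorSpan ℝ (maximizers d k l I))
  rw [hann, finrank_span_singleton hne, Module.finrank_fin_fun] at h
  omega

/-- for `1 ≤ k < h = |I| < l < d` and
`c = (l-h)e_I - (h-k)e_{I^c}`, the linear function `⟨c,·⟩` attains the maximum
`(l-h)k` on `Δ(d,k,l)`, exactly at the vertices `e_A` with `|A| = k`, `A ⊆ I`
or `|A| = l`, `I ⊆ A`; the corresponding face is the convex hull of those
vertices and is a facet (has dimension `d-1`). -/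
theorem facet_cayley (d k l : ℕ) (hk : 1 ≤ k) (hkl : k < l) (hld : l < d)
    (I : Finset (Fin d)) (hkI : k < I.card) (hIl : I.card < l) :
    (IsGreatest
        ((fun x => ∑ i, (if i ∈ I then (l : ℝ) - I.card else -((I.card : ℝ) - k)) * x i) ''
          Shyp d {k, l})
        (((l : ℝ) - I.card) * k)) ∧
    (∀ A : Finset (Fin d), A.card = k →
      ((∑ i, (if i ∈ I then (l : ℝ) - I.card else -((I.card : ℝ) - k)) * eVec d A i) =
          ((l : ℝ) - I.card) * k ↔ A ⊆ I)) ∧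
    (∀ A : Finset (Fin d), A.card = l →
      ((∑ i, (if i ∈ I then (l : ℝ) - I.card else -((I.card : ℝ) - k)) * eVec d A i) =
          ((l : ℝ) - I.card) * k ↔ I ⊆ A)) ∧
    (faceDir d (Shyp d {k, l})
        (fun i => if i ∈ I then (l : ℝ) - I.card else -((I.card : ℝ) - k)) =
      convexHull ℝ
        ({x | ∃ A : Finset (Fin d), A ⊆ I ∧ A.card = k ∧ x = eVec d A} ∪
         {x | ∃ A : Finset (Fin d), I ⊆ A ∧ A.card = l ∧ x = eVec d A})) ∧
    Module.finrank ℝ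
        (vectorSpan ℝ (faceDir d (Shyp d {k, l})
          (fun i => if i ∈ I then (l : ℝ) - I.card else -((I.card : ℝ) - k)))) = d - 1 := by
  have hbd : ∀ x ∈ Shyp d {k, l},
      pairing d (weight d k l I) x ≤ ((l : ℝ) - I.card) * k ∧
        (((l : ℝ) - I.card) * k ≤ pairing d (weight d k l I) x →
          x ∈ convexHull ℝ (maximizers d k l I)) := by
    intro x hx
    rw [← maximizers_eq hkl]
    refine mem_convexHull_maximizers _ _ _ ?_ hx
    rintro _ ⟨A, hA, rfl⟩
    rw [pairing_apply]
    exact weight_le hkl I A hA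
  obtain ⟨A, hAI, hA⟩ := Finset.exists_subset_card_eq hkI.le
  have hAmem : eVec d A ∈ Shyp d {k, l} := subset_convexHull ℝ _ ⟨A, by simp [hA], rfl⟩
  have hAval := (weight_eVec_small hkl I A hA).2.2 hAI
  have hface : faceDir d (Shyp d {k, l}) (weight d k l I) =
      convexHull ℝ (maximizers d k l I) := by
    ext x
    constructor
    · rintro ⟨hx, hmax⟩
      refine (hbd x hx).2 ?_
      rw [pairing_apply, ← hAval]
      exact hmax _ hAmem
    · intro hx
      rw [← maximizers_eq hkl] at hx
      have hx1 : x ∈ Shyp d {k, l} := convexHull_mono (Set.sep_subset _ _) hx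
      have hx2 : pairing d (weight d k l I) x = ((l : ℝ) - I.card) * k :=
        convexHull_min (t := {v | pairing d (weight d k l I) v = ((l : ℝ) - I.card) * k})
          (fun v hv => hv.2) (convex_hyperplane (LinearMap.isLinear _) _) hx
      refine ⟨hx1, fun y hy => ?_⟩
      rw [← pairing_apply, ← pairing_apply, hx2]
      exact (hbd y hy).1
  refine ⟨⟨⟨eVec d A, hAmem, hAval⟩, ?_⟩, fun B hB => (weight_eVec_small hkl I B hB).2,
    fun B hB => (weight_eVec_large hkl I B hB).2, hface, ?_⟩
  · rintro _ ⟨x, hx, rfl⟩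
    have := (hbd x hx).1
    rwa [pairing_apply] at this
  · change Module.finrank ℝ (vectorSpan ℝ (faceDir d (Shyp d {k, l}) (weight d k l I))) = d - 1
    rw [hface, ← direction_affineSpan, affineSpan_convexHull, direction_affineSpan]
    exact finrank_vectorSpan_maximizers hk hkl hld I hkI hIl
end
end

section
/- Let S = {s_1 < s_2 < ⋯ < s_k} ⊆ {0,1,…,d} be proper. A sequence of points v_1, v_2, …, v_m is a card-monotone path of Δ(d,S) — that is, each v_i is a vertex of Δ(d,S), each segment [v_i, v_{i+1}] is an edge of Δ(d,S), the coordinate sums card(v_1) < card(v_2) < ⋯ < card(v_m) are strictly increasing, card(v_1) = min{card(x) : x ∈ Δ(d,S)} and card(v_m) = max{card(x) : x ∈ Δ(d,S)} — if and only if m = k and there exists a chain of sets A_1 ⊂ A_2 ⊂ ⋯ ⊂ A_k ⊆ [d] with |A_i| = s_i and v_i = e_{A_i} for all i. -/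
/-!
Write `P` for the hypersimplex. Its vertices are exactly the vectors `e_A` with `|A| ∈ S`, and for
`|A| < |B|` the segment `[e_A, e_B]` is an edge if and only if `A ⊂ B` and no element of `S` lies
strictly between `|A|` and `|B|`.

* If the condition holds, the linear functional `x ↦ x(A) - x([d] \ B)` is maximised over the
  vectors `e_C` exactly at those `C` with `A ⊆ C ⊆ B`, that is, at `A` and `B`
  (`isExtreme_segment_eVec`). The case `A = B` shows that every `e_A` is a vertex.
* If `A ⊄ B`, exchanging some `a ∈ A \ B` with some `b ∈ B \ A` gives sets `A'`, `B'` of the same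
  sizes with `e_A + e_B = e_{A'} + e_{B'}`, so extremality would put `e_{A'}` on `[e_A, e_B]`, which
  is impossible (`subset_of_isExtreme_segment`).
* If `A ⊂ B` and `|A| < r < |B|` with `r ∈ S`, then by symmetry the average of all `e_C` with
  `A ⊆ C ⊆ B` and `|C| = r` lies on `[e_A, e_B]`, while no such `e_C` does. This contradicts the
  convexity of the complement of an extreme subset (`no_card_between_of_isExtreme_segment`).

Hence a monotone path starts at level `s 0`, can neither skip nor repeat a level, and ends at level
`s (k - 1)`: it is a chain with exactly one set for each element of `S`.
-/

open Set Pointwise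

noncomputable section

lemma exists_eVec_of_mem_extremePoints {d : ℕ} {S : Finset ℕ} {x : Fin d → ℝ}
    (hx : x ∈ Set.extremePoints ℝ (Shyp d S)) : ∃ A : Finset (Fin d), A.card ∈ S ∧ x = eVec d A :=
  extremePoints_convexHull_subset (A := {x | ∃ A : Finset (Fin d), A.card ∈ S ∧ x = eVec d A}) hx

lemma le_of_mem_convexHull {d : ℕ} {V : Set (Fin d → ℝ)} (L : (Fin d → ℝ) →ₗ[ℝ] ℝ) {M : ℝ}
    (hV : ∀ v ∈ V, L v ≤ M) {x : Fin d → ℝ} (hx : x ∈ convexHull ℝ V) : L x ≤ M :=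
  convexHull_min (t := {x | L x ≤ M}) hV (convex_halfSpace_le L.isLinear M) hx

/-- The face of a convex hull on which a linear functional is maximal is the convex hull of the
generators lying on it. -/
lemma mem_convexHull_face {d : ℕ} {V : Set (Fin d → ℝ)} (L : (Fin d → ℝ) →ₗ[ℝ] ℝ) {M : ℝ}
    (hV : ∀ v ∈ V, L v ≤ M) {x : Fin d → ℝ} (hx : x ∈ convexHull ℝ V) (hxM : L x = M) :
    x ∈ convexHull ℝ {v ∈ V | L v = M} := by
  set H := convexHull ℝ {v ∈ V | L v = M} with hH
  have hHM : ∀ y ∈ H, L y ≤ M := fun y hy => le_of_mem_convexHull L (fun v hv => hv.2.le) hy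
  -- The points strictly below the maximum, together with the candidate face, form a convex set.
  have hT : Convex ℝ {y | L y < M ∨ y ∈ H} := by
    intro y hy z hz a b ha hb hab
    have hyM : L y ≤ M := hy.elim le_of_lt (hHM y)
    have hzM : L z ≤ M := hz.elim le_of_lt (hHM z)
    rcases ha.eq_or_lt with rfl | ha'
    · obtain rfl : b = 1 := by linarith
      simpa using hz
    rcases hb.eq_or_lt with rfl | hb'
    · obtain rfl : a = 1 := by linarith
      simpa using hy
    have hM : M = a * M + b * M := by rw [← add_mul, hab, one_mul]
    rcases hy with hy | hy
    · left
      simp only [map_add, map_smul, smul_eq_mul]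
      nlinarith [mul_lt_mul_of_pos_left hy ha', mul_le_mul_of_nonneg_left hzM hb]
    rcases hz with hz | hz
    · left
      simp only [map_add, map_smul, smul_eq_mul]
      nlinarith [mul_lt_mul_of_pos_left hz hb', mul_le_mul_of_nonneg_left hyM ha]
    · exact Or.inr (convex_convexHull ℝ _ hy hz ha hb hab)
  have hsub : V ⊆ {y | L y < M ∨ y ∈ H} := fun v hv =>
    (hV v hv).lt_or_eq.imp id fun h => subset_convexHull ℝ _ ⟨hv, h⟩
  rcases convexHull_min hsub hT hx with h | h
  · exact absurd hxM h.ne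
  · exact h

/-- A sufficient condition for an edge. The case `A = B` is allowed and says that `e_A` is a
vertex. -/
lemma isExtreme_segment_eVec {d : ℕ} {S : Finset ℕ} {A B : Finset (Fin d)} (hAB : A ⊆ B)
    (hA : A.card ∈ S) (hB : B.card ∈ S)
    (hS : ∀ C : Finset (Fin d), C.card ∈ S → A ⊆ C → C ⊆ B → C = A ∨ C = B) :
    IsExtreme ℝ (Shyp d S) (segment ℝ (eVec d A) (eVec d B)) := by
  set c : Fin d → ℝ := fun i => if i ∈ A then 1 else if i ∈ B then 0 else -1 with hc
  set L : (Fin d → ℝ) →ₗ[ℝ] ℝ := Fintype.linearCombination ℝ c with hL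
  set M : ℝ := ∑ i, eVec d A i with hM
  have hLe : ∀ x, L x = ∑ i, x i * c i := fun x => by
    simp [hL, Fintype.linearCombination_apply]
  have hterm : ∀ C : Finset (Fin d), ∀ i ∈ Finset.univ, eVec d C i * c i ≤ eVec d A i := by
    intro C i _
    simp only [hc, eVec]
    split_ifs <;> norm_num
  have hmax : ∀ v ∈ {x | ∃ A : Finset (Fin d), A.card ∈ S ∧ x = eVec d A}, L v ≤ M := by
    rintro _ ⟨C, -, rfl⟩
    rw [hLe]
    exact Finset.sum_le_sum (hterm C)
  have hLA : L (eVec d A) = M := by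
    rw [hLe]
    refine Finset.sum_congr rfl fun i _ => ?_
    by_cases h : i ∈ A <;> simp [hc, eVec, h]
  have hLB : L (eVec d B) = M := by
    rw [hLe]
    refine Finset.sum_congr rfl fun i _ => ?_
    by_cases h : i ∈ A
    · simp [hc, eVec, h, hAB h]
    · by_cases h' : i ∈ B <;> simp [hc, eVec, h, h']
  have hface : ∀ x ∈ Shyp d S, L x = M → x ∈ segment ℝ (eVec d A) (eVec d B) := by
    intro x hx hxM
    rw [← convexHull_pair]
    refine convexHull_mono ?_ (mem_convexHull_face L hmax hx hxM)
    rintro _ ⟨⟨C, hC, rfl⟩, hCM⟩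
    rw [hLe] at hCM
    have heq := (Finset.sum_eq_sum_iff_of_le (hterm C)).1 hCM
    have hAC : A ⊆ C := by
      intro i hi
      by_contra h
      have := heq i (Finset.mem_univ i)
      simp [hc, eVec, hi, h] at this
    have hCB : C ⊆ B := by
      intro i hi
      by_contra h
      have := heq i (Finset.mem_univ i)
      have hiA : i ∉ A := fun h' => h (hAB h')
      simp [hc, eVec, hi, h, hiA] at this
    rcases hS C hC hAC hCB with rfl | rfl <;> simp
  refine ⟨(convex_convexHull ℝ _).segment_subset (eVec_mem_Shyp hA) (eVec_mem_Shyp hB), ?_⟩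
  rintro x hx y hy z ⟨p, q, -, -, hpq, rfl⟩ ⟨a, b, ha, hb, hab, hz⟩
  have hLz : a * L x + b * L y = M := by
    have := congrArg L hz
    simp only [map_add, map_smul, smul_eq_mul, hLA, hLB] at this
    rw [this, ← add_mul, hpq, one_mul]
  have hxM : L x ≤ M := le_of_mem_convexHull L hmax hx
  have hyM : L y ≤ M := le_of_mem_convexHull L hmax hy
  refine hface x hx (le_antisymm hxM ?_)
  have hM' : M = a * M + b * M := by rw [← add_mul, hab, one_mul]
  by_contra! h
  nlinarith [mul_lt_mul_of_pos_left h ha, mul_le_mul_of_nonneg_left hyM hb.le]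

lemma eVec_mem_extremePoints {d : ℕ} {S : Finset ℕ} {A : Finset (Fin d)} (hA : A.card ∈ S) :
    eVec d A ∈ Set.extremePoints ℝ (Shyp d S) := by
  have := isExtreme_segment_eVec (Finset.Subset.refl A) hA hA
    fun C _ h h' => Or.inl (Finset.Subset.antisymm h' h)
  rwa [segment_same, isExtreme_singleton] at this

/-! ### Necessary conditions for an edge -/

lemma subset_of_isExtreme_segment {d : ℕ} {S : Finset ℕ} {A B : Finset (Fin d)}
    (hA : A.card ∈ S) (hB : B.card ∈ S) (hlt : A.card < B.card)
    (hE : IsExtreme ℝ (Shyp d S) (segment ℝ (eVec d A) (eVec d B))) : A ⊆ B := by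
  intro a ha
  by_contra haB
  obtain ⟨b, hb, hbA⟩ := Finset.exists_mem_notMem_of_card_lt_card hlt
  have hab : a ≠ b := fun h => haB (h ▸ hb)
  set A' := insert b (A.erase a) with hA'
  set B' := insert a (B.erase b) with hB'
  have hcA : A'.card = A.card := by
    rw [hA', Finset.card_insert_of_notMem (by simp [hbA]), Finset.card_erase_add_one ha]
  have hcB : B'.card = B.card := by
    rw [hB', Finset.card_insert_of_notMem (by simp [haB]), Finset.card_erase_add_one hb]
  have hsum : ∀ i, eVec d A' i + eVec d B' i = eVec d A i + eVec d B i := by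
    intro i
    rcases eq_or_ne i a with rfl | hia
    · simp [eVec, hA', hB', hab, ha, haB]
    rcases eq_or_ne i b with rfl | hib
    · simp [eVec, hA', hB', hia, hb, hbA]
    · simp [eVec, hA', hB', hia, hib]
  -- The common midpoint of `[e_A, e_B]` and `[e_A', e_B']` forces `e_A'` onto `[e_A, e_B]`.
  have hmem : eVec d A' ∈ segment ℝ (eVec d A) (eVec d B) := by
    refine hE.left_mem_of_mem_openSegment (eVec_mem_Shyp (hcA ▸ hA)) (eVec_mem_Shyp (hcB ▸ hB))
      (z := (1 / 2 : ℝ) • eVec d A + (1 / 2 : ℝ) • eVec d B)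
      ⟨1 / 2, 1 / 2, by norm_num, by norm_num, by norm_num, rfl⟩
      ⟨1 / 2, 1 / 2, by norm_num, by norm_num, by norm_num, ?_⟩
    rw [← smul_add, ← smul_add]
    exact congrArg _ (funext hsum)
  obtain ⟨p, q, -, -, hpq, h⟩ := hmem
  -- Coordinate `b` forces `e_A' = e_B`, which contradicts the coordinate sums.
  have hq : q = 1 := by
    have := congrFun h b
    simpa [eVec, hA', hb, hbA] using this
  have hp : p = 0 := by linarith
  have hs : ∑ i, eVec d B i = ∑ i, eVec d A' i := by
    rw [← h, hp, hq]
    simp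
  rw [sum_eVec, sum_eVec, hcA] at hs
  exact hlt.ne' (by exact_mod_cast hs)

lemma no_card_between_of_isExtreme_segment {d : ℕ} {S : Finset ℕ} {A B : Finset (Fin d)}
    (hAB : A ⊆ B) (hE : IsExtreme ℝ (Shyp d S) (segment ℝ (eVec d A) (eVec d B)))
    {r : ℕ} (hr : r ∈ S) (hAr : A.card < r) (hrB : r < B.card) : False := by
  set Q : Finset (Finset (Fin d)) :=
    Finset.univ.filter fun C => A ⊆ C ∧ C ⊆ B ∧ C.card = r with hQ
  have hQne : Q.Nonempty := by
    obtain ⟨C, hAC, hCB, hC⟩ := Finset.exists_subsuperset_card_eq hAB hAr.le hrB.le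
    exact ⟨C, by simp [hQ, hAC, hCB, hC]⟩
  have hQpos : (0 : ℝ) < Q.card := by exact_mod_cast hQne.card_pos
  have hnot : ∀ C ∈ Q, eVec d C ∈ Shyp d S \ segment ℝ (eVec d A) (eVec d B) := by
    intro C hC
    obtain ⟨hAC, hCB, hCr⟩ : A ⊆ C ∧ C ⊆ B ∧ C.card = r := by simpa [hQ] using hC
    refine ⟨eVec_mem_Shyp (hCr ▸ hr), ?_⟩
    rintro ⟨p, q, -, -, -, h⟩
    -- All coordinates in `B \ A` agree on the segment, but those of `e_C` do not.
    obtain ⟨i, hiC, hiA⟩ := Finset.exists_mem_notMem_of_card_lt_card (hCr.symm ▸ hAr)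
    obtain ⟨j, hjB, hjC⟩ := Finset.exists_mem_notMem_of_card_lt_card (hCr.symm ▸ hrB)
    have h1 : q = 1 := by simpa [eVec, hiC, hiA, hCB hiC] using congrFun h i
    have h2 : q = 0 := by
      have hjA : j ∉ A := fun h' => hjC (hAC h')
      simpa [eVec, hjC, hjB, hjA] using congrFun h j
    exact one_ne_zero (h1.symm.trans h2)
  have hconv : Convex ℝ (Shyp d S \ segment ℝ (eVec d A) (eVec d B)) :=
    hE.convex_sdiff (convex_convexHull ℝ _)
  have havg := hconv.sum_mem (t := Q) (w := fun _ => (Q.card : ℝ)⁻¹) (z := fun C => eVec d C)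
    (fun _ _ => by positivity) (by simp [hQpos.ne']) hnot
  -- By symmetry, each `i ∈ B \ A` lies in the same number of members of `Q`.
  have hswap : ∀ i j, i ∈ B → i ∉ A → j ∈ B → j ∉ A →
      (Q.filter (i ∈ ·)).card ≤ (Q.filter (j ∈ ·)).card := by
    intro i j hiB hiA hjB hjA
    refine Finset.card_le_card_of_injOn
      (fun C => C.map (Equiv.swap i j).toEmbedding) ?_ (fun C _ D _ h => Finset.map_injective _ h)
    intro C hC
    simp only [hQ, Finset.coe_filter, Finset.mem_filter, Finset.mem_univ, true_and,
      Set.mem_ofPred_eq] at hC ⊢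
    obtain ⟨⟨hAC, hCB, hCr⟩, hiC⟩ := hC
    refine ⟨⟨fun t ht => ?_, fun t ht => ?_, by simpa using hCr⟩, ?_⟩
    · have hti : t ≠ i := fun h => hiA (h ▸ ht)
      have htj : t ≠ j := fun h => hjA (h ▸ ht)
      exact Finset.mem_map.2 ⟨t, hAC ht, Equiv.swap_apply_of_ne_of_ne hti htj⟩
    · obtain ⟨u, hu, rfl⟩ := Finset.mem_map.1 ht
      simp only [Equiv.coe_toEmbedding, Equiv.swap_apply_def]
      split_ifs
      · exact hjB
      · exact hiB
      · exact hCB hu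
    · exact Finset.mem_map.2 ⟨i, hiC, Equiv.swap_apply_left i j⟩
  obtain ⟨b, hbB, hbA⟩ := Finset.exists_mem_notMem_of_card_lt_card (hAr.trans hrB)
  set q : ℝ := (Q.card : ℝ)⁻¹ * (Q.filter (b ∈ ·)).card with hq
  have hq0 : 0 ≤ q := by positivity
  have hq1 : q ≤ 1 := by
    rw [hq, inv_mul_le_iff₀ hQpos, mul_one]
    exact_mod_cast Finset.card_filter_le _ _
  have hcoord : ∀ i, (∑ C ∈ Q, (Q.card : ℝ)⁻¹ • eVec d C) i
      = (Q.card : ℝ)⁻¹ * (Q.filter (i ∈ ·)).card := by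
    intro i
    rw [← Finset.smul_sum, Pi.smul_apply, Finset.sum_apply, smul_eq_mul]
    simp [eVec]
  refine havg.2 ⟨1 - q, q, by linarith, hq0, by ring, funext fun i => ?_⟩
  rw [hcoord]
  by_cases hiA : i ∈ A
  · have : Q.filter (i ∈ ·) = Q := Finset.filter_true_of_mem fun C hC => by
      simp only [hQ, Finset.mem_filter] at hC
      exact hC.2.1 hiA
    rw [this, inv_mul_cancel₀ hQpos.ne']
    simp [eVec, hiA, hAB hiA]
  · by_cases hiB : i ∈ B
    · rw [le_antisymm (hswap i b hiB hiA hbB hbA) (hswap b i hbB hbA hiB hiA), ← hq]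
      simp [eVec, hiA, hiB]
    · have : Q.filter (i ∈ ·) = ∅ := Finset.filter_false_of_mem fun C hC hiC => by
        simp only [hQ, Finset.mem_filter] at hC
        exact hiB (hC.2.2.1 hiC)
      rw [this]
      simp [eVec, hiA, hiB]

/-! ### Coordinate sums and monotone paths -/

lemma sum_le_of_mem_Shyp {d : ℕ} {S : Finset ℕ} {M : ℕ} (hS : ∀ r ∈ S, r ≤ M) {x : Fin d → ℝ}
    (hx : x ∈ Shyp d S) : ∑ t, x t ≤ M := by
  have := le_of_mem_convexHull (Fintype.linearCombination ℝ fun _ : Fin d => (1 : ℝ)) (M := M)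
    (by
      rintro _ ⟨A, hA, rfl⟩
      simpa [Fintype.linearCombination_apply, sum_eVec] using hS _ hA) hx
  simpa [Fintype.linearCombination_apply] using this

lemma le_sum_of_mem_Shyp {d : ℕ} {S : Finset ℕ} {M : ℕ} (hS : ∀ r ∈ S, M ≤ r) {x : Fin d → ℝ}
    (hx : x ∈ Shyp d S) : (M : ℝ) ≤ ∑ t, x t := by
  have := le_of_mem_convexHull (-Fintype.linearCombination ℝ fun _ : Fin d => (1 : ℝ))
    (M := -(M : ℝ))
    (by
      rintro _ ⟨A, hA, rfl⟩
      simpa [Fintype.linearCombination_apply, sum_eVec] using hS _ hA) hx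
  simpa [Fintype.linearCombination_apply] using this

/-- for proper `S = {s 0 < ⋯ < s (k-1)}`, the card-monotone paths
of `Δ(d,S)` are exactly the sequences `e_{A 0}, …, e_{A (k-1)}` for chains
`A 0 ⊂ A 1 ⊂ ⋯ ⊂ A (k-1) ⊆ [d]` with `|A i| = s i`. -/
theorem monotone_paths_Shyp (d k : ℕ) (hd : 1 ≤ d) (hk : 1 ≤ k) (s : ℕ → ℕ)
    (hmono : ∀ i, i + 1 < k → s i < s (i + 1)) (hsd : ∀ i, i < k → s i ≤ d)
    (hproper : affineSpan ℝ (Shyp d ((Finset.range k).image s)) = ⊤)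
    (m : ℕ) (hm : 1 ≤ m) (v : ℕ → Fin d → ℝ) :
    ((∀ i, i < m → v i ∈ Set.extremePoints ℝ (Shyp d ((Finset.range k).image s))) ∧
     (∀ i, i + 1 < m → v i ≠ v (i + 1) ∧
        IsExtreme ℝ (Shyp d ((Finset.range k).image s)) (segment ℝ (v i) (v (i + 1)))) ∧
     (∀ i, i + 1 < m → ∑ t, v i t < ∑ t, v (i + 1) t) ∧
     IsLeast ((fun x => ∑ t, x t) '' Shyp d ((Finset.range k).image s)) (∑ t, v 0 t) ∧
     IsGreatest ((fun x => ∑ t, x t) '' Shyp d ((Finset.range k).image s))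
       (∑ t, v (m - 1) t)) ↔
    (m = k ∧ ∃ A : ℕ → Finset (Fin d),
      (∀ i, i + 1 < k → A i ⊂ A (i + 1)) ∧
      (∀ i, i < k → (A i).card = s i ∧ v i = eVec d (A i))) := by
  have hlt : ∀ i j, i < j → j < k → s i < s j := by
    intro i j hij
    induction j, hij using Nat.le_induction with
    | base => exact fun h => hmono i h
    | succ j hj ih => exact fun h => (ih (by omega)).trans (hmono j h)
  have hle : ∀ i j, i ≤ j → j < k → s i ≤ s j := by
    intro i j hij hj
    rcases hij.eq_or_lt with rfl | h
    · exact le_rfl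
    · exact (hlt i j h hj).le
  set S := (Finset.range k).image s with hS
  have hsS : ∀ i, i < k → s i ∈ S := fun i hi =>
    Finset.mem_image_of_mem s (Finset.mem_range.2 hi)
  have hSs : ∀ r ∈ S, ∃ i < k, s i = r := by
    intro r hr
    simpa [hS] using hr
  have hSmin : ∀ r ∈ S, s 0 ≤ r := by
    intro r hr
    obtain ⟨i, hi, rfl⟩ := hSs r hr
    exact hle 0 i (Nat.zero_le i) hi
  have hSmax : ∀ r ∈ S, r ≤ s (k - 1) := by
    intro r hr
    obtain ⟨i, hi, rfl⟩ := hSs r hr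
    exact hle i (k - 1) (by omega) (by omega)
  have hset : ∀ i, i < k → ∃ A : Finset (Fin d), A.card = s i := by
    intro i hi
    obtain ⟨A, -, hA⟩ := Finset.exists_subset_card_eq (s := (Finset.univ : Finset (Fin d)))
      (n := s i) (by simpa using hsd i hi)
    exact ⟨A, hA⟩
  constructor
  · rintro ⟨hvert, hedge, hinc, hmin, hmax⟩
    choose A hAS hvA using fun i (hi : i < m) => exists_eVec_of_mem_extremePoints (hvert i hi)
    have hsum : ∀ i (hi : i < m), ∑ t, v i t = ((A i hi).card : ℝ) := by
      intro i hi
      rw [hvA i hi, sum_eVec]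
    have hcard : ∀ i (hi : i + 1 < m), (A i (by omega)).card < (A (i + 1) hi).card := by
      intro i hi
      have := hinc i hi
      rw [hsum i (by omega), hsum (i + 1) hi] at this
      exact_mod_cast this
    have hsub : ∀ i (hi : i + 1 < m), A i (by omega) ⊆ A (i + 1) hi := by
      intro i hi
      have hE := (hedge i hi).2
      rw [hvA i (by omega), hvA (i + 1) hi] at hE
      exact subset_of_isExtreme_segment (hAS _ _) (hAS _ _) (hcard i hi) hE
    have hlevel : ∀ i (hi : i < m), i < k ∧ (A i hi).card = s i := by
      intro i
      induction i with
      | zero =>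
        intro hi
        refine ⟨hk, le_antisymm ?_ (hSmin _ (hAS 0 hi))⟩
        obtain ⟨B, hB⟩ := hset 0 hk
        have := hmin.2 ⟨eVec d B, eVec_mem_Shyp (hB ▸ hsS 0 hk), rfl⟩
        rw [hsum 0 hi] at this
        simp only [sum_eVec, hB] at this
        exact_mod_cast this
      | succ i ih =>
        intro hi
        obtain ⟨hik, hci⟩ := ih (by omega)
        obtain ⟨j, hj, hcj⟩ := hSs _ (hAS (i + 1) hi)
        have hc := hcard i hi
        rw [hci, ← hcj] at hc
        have hij : i < j := by
          by_contra! h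
          exact absurd (hle j i h hik) (by omega)
        refine ⟨by omega, ?_⟩
        rcases (Nat.succ_le_of_lt hij).eq_or_lt with h | h
        · rw [← hcj, ← h]
        · have hE := (hedge i hi).2
          rw [hvA i (by omega), hvA (i + 1) hi] at hE
          exact (no_card_between_of_isExtreme_segment (hsub i hi) hE
            (hsS (i + 1) (by omega)) (by rw [hci]; exact hmono i (by omega))
            (by rw [← hcj]; exact hlt (i + 1) j h hj)).elim
    obtain ⟨hlast, hclast⟩ := hlevel (m - 1) (by omega)
    have hmk : m = k := by
      by_contra hne
      obtain ⟨B, hB⟩ := hset (k - 1) (by omega)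
      have := hmax.2 ⟨eVec d B, eVec_mem_Shyp (hB ▸ hsS (k - 1) (by omega)), rfl⟩
      rw [hsum (m - 1) (by omega), hclast] at this
      simp only [sum_eVec, hB] at this
      have h' : s (k - 1) ≤ s (m - 1) := by exact_mod_cast this
      exact absurd (hlt (m - 1) (k - 1) (by omega) (by omega)) (by omega)
    subst hmk
    refine ⟨rfl, fun i => if hi : i < m then A i hi else ∅, ?_, ?_⟩
    · intro i hi
      have hi' : i < m := by omega
      simp only [hi, hi', dif_pos]
      exact Finset.ssubset_iff_subset_ne.2 ⟨hsub i hi, fun h => (hcard i hi).ne (by rw [h])⟩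
    · intro i hi
      simp only [hi, dif_pos]
      exact ⟨(hlevel i hi).2, hvA i hi⟩
  · rintro ⟨rfl, A, hchain, hA⟩
    have hAS : ∀ i, i < m → (A i).card ∈ S := fun i hi => (hA i hi).1 ▸ hsS i hi
    have hsum : ∀ i, i < m → ∑ t, v i t = (s i : ℝ) := by
      intro i hi
      rw [(hA i hi).2, sum_eVec, (hA i hi).1]
    have hmem : ∀ i, i < m → v i ∈ Shyp d S := fun i hi =>
      (hA i hi).2 ▸ eVec_mem_Shyp (hAS i hi)
    have hinc : ∀ i, i + 1 < m → ∑ t, v i t < ∑ t, v (i + 1) t := by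
      intro i hi
      rw [hsum i (by omega), hsum (i + 1) hi]
      exact_mod_cast hmono i hi
    refine ⟨fun i hi => ?_, fun i hi => ⟨fun h => ?_, ?_⟩, hinc, ⟨⟨v 0, hmem 0 hk, rfl⟩, ?_⟩,
      ⟨⟨v (m - 1), hmem _ (by omega), rfl⟩, ?_⟩⟩
    · rw [(hA i hi).2]
      exact eVec_mem_extremePoints (hAS i hi)
    · exact (hinc i hi).ne (by rw [h])
    · have hi' : i < m := by omega
      rw [(hA i hi').2, (hA (i + 1) hi).2]
      refine isExtreme_segment_eVec (hchain i hi).subset (hAS i hi') (hAS (i + 1) hi) ?_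
      intro C hC hAC hCB
      obtain ⟨j, hj, hcj⟩ := hSs _ hC
      rcases Nat.lt_or_ge i j with h | h
      · refine Or.inr (Finset.eq_of_subset_of_card_le hCB ?_)
        rw [(hA (i + 1) hi).1, ← hcj]
        exact hle (i + 1) j h hj
      · refine Or.inl (Finset.eq_of_subset_of_card_le hAC ?_).symm
        rw [(hA i hi').1, ← hcj]
        exact hle j i h hi'
    · rintro _ ⟨x, hx, rfl⟩
      rw [hsum 0 hk]
      exact le_sum_of_mem_Shyp hSmin hx
    · rintro _ ⟨x, hx, rfl⟩
      rw [hsum (m - 1) (by omega)]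
      exact sum_le_of_mem_Shyp hSmax hx
end
end

section
/- Let 0 = s_0 < s_1 < ⋯ < s_k = d with k ≥ 1. Then the Minkowski sum Δ(d,s_0) + Δ(d,s_1) + ⋯ + Δ(d,s_k) equals the permutahedron Π(p), where p ∈ ℝ^d is the weakly decreasing vector with p_j = #{i ∈ {1,…,k} : s_i ≥ j} for j = 1,…,d, i.e., p = (k^{s_1−s_0}, (k−1)^{s_2−s_1}, …, 1^{s_k−s_{k−1}}). (This identifies the monotone path polytope Σ_card(Δ(d,S)), up to homothety, with this multipermutahedron.) -/
/-!
Both sides are compact convex sets, so it suffices to compare them through their vertices and through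
linear functionals. Write `I m` for the initial segment `{j | j < m}` of `Fin d`. Counting gives
`p = ∑ i, eVec d (I (s i))` (`perm_point_eq_sum`), so each point `p ∘ σ` is a sum of vertices of the
hypersimplices `Δ(d, s i)`, whence `Π(p)` lies in the Minkowski sum.

Conversely, given a linear functional with coefficients `c`, a single permutation `σ` sorting `c` in
decreasing order maximizes it over all the hypersimplices at once: by the rearrangement inequality, the
maximum over `Δ(d, m)` is attained at the indicator of the `m` largest coefficients, which is
`eVec d (I m) ∘ σ` (`sum_mul_eVec_le`). Summing over `i`, the functional on the Minkowski sum is bounded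
by its value at `p ∘ σ`, a point of `Π(p)`, so Hahn–Banach separation gives the other inclusion.
-/

open Set Pointwise

noncomputable section

/-- The initial segment `{j | j < m}` of `Fin d`; it has `m` elements only when `m ≤ d`. -/
def initSeg (d m : ℕ) : Finset (Fin d) := Finset.univ.filter (fun j => (j : ℕ) < m)

lemma card_initSeg {d m : ℕ} (h : m ≤ d) : (initSeg d m).card = m := by
  simp [initSeg, Fin.card_filter_val_lt, h]

lemma eVec_comp_perm (d : ℕ) (A : Finset (Fin d)) (σ : Equiv.Perm (Fin d)) :
    (fun i => eVec d A (σ i)) = eVec d (A.map σ.symm.toEmbedding) := by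
  funext i
  simp [eVec, Finset.mem_map_equiv]

lemma eVec_comp_perm_mem_Shyp {d m : ℕ} (h : m ≤ d) (σ : Equiv.Perm (Fin d)) :
    (fun j => eVec d (initSeg d m) (σ j)) ∈ Shyp d {m} := by
  apply subset_convexHull
  exact ⟨_, by simp [card_initSeg h], eVec_comp_perm d _ σ⟩

/-- Every `0/1`-vector with `m` ones is a rearrangement of the indicator of the initial segment. -/
lemma exists_perm_eVec {d m : ℕ} {A : Finset (Fin d)} (h : A.card = m) :
    ∃ τ : Equiv.Perm (Fin d), ∀ i, eVec d A i = eVec d (initSeg d m) (τ i) := by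
  have hm : m ≤ d := by simpa [h] using A.card_le_univ
  obtain ⟨τ, hτ⟩ := Equiv.Perm.exists_map_finset_eq (initSeg d m) A (by rw [card_initSeg hm, h])
  refine ⟨τ.symm, fun i => ?_⟩
  have := congrFun (eVec_comp_perm d (initSeg d m) τ.symm) i
  rw [this, ← hτ]
  rfl

/-- If `σ` ranks the coefficients `c` in decreasing order, then the indicator of the `m` top-ranked
indices maximizes `c` over all `0/1`-vectors with `m` ones. -/
lemma sum_mul_eVec_le {d m : ℕ} {c : Fin d → ℝ} {σ : Equiv.Perm (Fin d)}
    (hσ : ∀ i j, σ j < σ i → c i ≤ c j) {A : Finset (Fin d)} (h : A.card = m) :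
    ∑ i, c i * eVec d A i ≤ ∑ i, c i * eVec d (initSeg d m) (σ i) := by
  obtain ⟨τ, hτ⟩ := exists_perm_eVec h
  have hmono : Monovary c (fun i => eVec d (initSeg d m) (σ i)) := by
    intro i j hij
    apply hσ
    by_contra hle
    simp only [eVec, initSeg, Finset.mem_filter, Finset.mem_univ, true_and] at hij
    rw [not_lt, Fin.le_def] at hle
    split_ifs at hij <;> first | omega | (norm_num at hij)
  have := hmono.sum_mul_comp_perm_le_sum_mul (σ := τ.trans σ.symm)
  simpa [hτ] using this

lemma exists_sorting_perm {d : ℕ} (c : Fin d → ℝ) :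
    ∃ σ : Equiv.Perm (Fin d), ∀ i j, σ j < σ i → c i ≤ c j := by
  refine ⟨(Tuple.sort (fun i => -c i)).symm, fun i j hij => ?_⟩
  have := Tuple.monotone_sort (fun i => -c i) hij.le
  simpa using this

lemma apply_eq_sum {d : ℕ} (f : StrongDual ℝ (Fin d → ℝ)) (x : Fin d → ℝ) :
    f x = ∑ i, f (Pi.single i 1) * x i := by
  conv_lhs => rw [pi_eq_sum_univ' x]
  simp [map_sum, mul_comm]

/-- The weight vector of the permutahedron is the sum of the indicators of initial segments. The term
`i = 0` vanishes, which accounts for the index range starting at `1`. -/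
lemma perm_point_eq_sum (d k : ℕ) (s : ℕ → ℕ) (h0 : s 0 = 0) (j : Fin d) :
    (((Finset.Icc 1 k).filter (fun i => (j : ℕ) + 1 ≤ s i)).card : ℝ) =
      ∑ i ∈ Finset.range (k + 1), eVec d (initSeg d (s i)) j := by
  simp only [eVec, initSeg, Finset.mem_filter, Finset.mem_univ, true_and]
  rw [Finset.sum_boole]
  congr 2
  ext i
  simp only [Finset.mem_filter, Finset.mem_Icc, Finset.mem_range]
  have : i = 0 → s i = 0 := by rintro rfl; exact h0
  omega

/-- for `0 = s 0 < s 1 < ⋯ < s k = d`, the Minkowski sum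
`Δ(d,s 0) + Δ(d,s 1) + ⋯ + Δ(d,s k)` is the permutahedron `Π(p)` with
`p_j = #{i ∈ {1,…,k} : s i ≥ j}`, i.e. `p = (k^{s₁-s₀},…,1^{s_k-s_{k-1}})`.
(This identifies the monotone path polytope of `Δ(d,S)` up to homothety.) -/
theorem minkowski_sum_hypersimplices (d k : ℕ) (hk : 1 ≤ k) (s : ℕ → ℕ)
    (h0 : s 0 = 0) (hkd : s k = d)
    (hmono : ∀ i, i < k → s i < s (i + 1)) :
    (∑ i ∈ Finset.range (k + 1), Shyp d {s i}) =
      permPoly d (fun j : Fin d =>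
        (((Finset.Icc 1 k).filter (fun i => (j : ℕ) + 1 ≤ s i)).card : ℝ)) := by
  have hle : ∀ i ∈ Finset.range (k + 1), s i ≤ d := by
    intro i hi
    have hi : i ≤ k := by simpa [Nat.lt_succ_iff] using hi
    rw [← hkd]
    induction hi using Nat.decreasingInduction with
    | self => exact le_rfl
    | of_succ n hn ih => exact (hmono n hn).le.trans (ih (by simpa using hn))
  simp only [perm_point_eq_sum d k s h0]
  apply Subset.antisymm
  · intro x hx
    by_contra hxP
    have hfin : {x : Fin d → ℝ | ∃ σ : Equiv.Perm (Fin d),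
        x = fun j => ∑ i ∈ Finset.range (k + 1), eVec d (initSeg d (s i)) (σ j)}.Finite :=
      (Set.finite_range (fun (σ : Equiv.Perm (Fin d)) (j : Fin d) =>
        ∑ i ∈ Finset.range (k + 1), eVec d (initSeg d (s i)) (σ j))).subset
        (by rintro _ ⟨σ, rfl⟩; exact ⟨σ, rfl⟩)
    obtain ⟨f, u, hf, hu⟩ := geometric_hahn_banach_closed_point (convex_convexHull ℝ _)
      (hfin.isCompact_convexHull ℝ).isClosed hxP
    obtain ⟨σ, hσ⟩ := exists_sorting_perm (fun i => f (Pi.single i 1))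
    -- The same `σ` serves for every summand, so the bounds add up to the value of `f` at `p ∘ σ`.
    have hp := hf _ (subset_convexHull ℝ _ ⟨σ, rfl⟩)
    obtain ⟨y, hy, rfl⟩ := (Set.mem_finsetSum _ _ _).1 hx
    have key : ∀ i ∈ Finset.range (k + 1),
        f (y i) ≤ f (fun j => eVec d (initSeg d (s i)) (σ j)) := by
      intro i hi
      have hsub : Shyp d {s i} ⊆ {z | f z ≤ f (fun j => eVec d (initSeg d (s i)) (σ j))} := by
        refine convexHull_min ?_ (convex_halfSpace_le f.toLinearMap.isLinear _)
        rintro _ ⟨A, hA, rfl⟩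
        rw [mem_ofPred_eq, apply_eq_sum f, apply_eq_sum f]
        exact sum_mul_eVec_le hσ (by simpa using hA)
      exact hsub (hy hi)
    have hsum := Finset.sum_le_sum key
    rw [← map_sum, ← map_sum] at hsum
    have hpt : (∑ i ∈ Finset.range (k + 1), fun j => eVec d (initSeg d (s i)) (σ j)) =
        fun j => ∑ i ∈ Finset.range (k + 1), eVec d (initSeg d (s i)) (σ j) := by
      funext j
      simp
    rw [hpt] at hsum
    linarith
  · refine convexHull_min ?_ (convex_sum _ fun i _ => convex_convexHull ℝ _)
    rintro _ ⟨σ, rfl⟩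
    refine (Set.mem_finsetSum _ _ _).2
      ⟨fun i j => eVec d (initSeg d (s i)) (σ j), fun {i} hi =>
        eVec_comp_perm_mem_Shyp (hle i hi) σ, ?_⟩
    funext j
    simp
end
end

section
/- Let d > 1 and let S ⊆ {0,1,…,d} be nonempty. The S-hypersimplex Δ(d,S) is d-dimensional (its affine hull is all of ℝ^d) if and only if |S| ≥ 2 and S ≠ {0, d}. -/
/-!
The affine span of `Δ(d,S)` is that of its generating 0/1-vectors, so only those matter.

If all members of `S` equal one `s`, the vectors lie on the hyperplane `∑ xᵢ = s`; if `S = {0, d}`,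
they lie on `x₀ = x₁`. A nonconstant linear functional that is constant on a set keeps its affine
span proper (`eq_of_affineSpan_eq_top`).

Conversely, `|S| ≥ 2` and `S ≠ {0, d}` force some `s ∈ S` with `0 < s < d`. Exchanging `i` for `j`
in an `s`-set shows `eᵢ - eⱼ` is a direction of the span (`single_sub_single_mem`). Modulo these
directions `e_A` equals `|A| eⱼ`, so comparing an `s`-set with a `t`-set, `t ∈ S`, `t ≠ s`, gives
`(s - t) eⱼ`, hence every `eⱼ`.
-/

open Set Pointwise

noncomputable section

/-- A linear functional constant on a spanning set is constant everywhere. -/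
lemma eq_of_affineSpan_eq_top {d : ℕ} {V : Set (Fin d → ℝ)} (hV : affineSpan ℝ V = ⊤)
    (f : (Fin d → ℝ) →ₗ[ℝ] ℝ) (b : ℝ) (h : ∀ x ∈ V, f x = b) (x : Fin d → ℝ) : f x = b := by
  have hx : x ∈ affineSpan ℝ V := hV ▸ AffineSubspace.mem_top ℝ _ x
  refine affineSpan_induction (p := fun x => f x = b) hx h ?_
  intro c u v w hu hv hw
  simp [hu, hv, hw]

lemma eVec_eq_sum (d : ℕ) (A : Finset (Fin d)) :
    eVec d A = ∑ i ∈ A, Pi.single i (1 : ℝ) := by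
  ext k
  simp [eVec, Finset.sum_apply, Pi.single_apply]

/-- The 0/1-vectors generating `Δ(d,S)`. -/
def genSet (d : ℕ) (S : Finset ℕ) : Set (Fin d → ℝ) :=
  {x | ∃ A : Finset (Fin d), A.card ∈ S ∧ x = eVec d A}

lemma eVec_sub_mem {d : ℕ} {S : Finset ℕ} {A B : Finset (Fin d)} (hA : A.card ∈ S)
    (hB : B.card ∈ S) : eVec d A - eVec d B ∈ vectorSpan ℝ (genSet d S) :=
  vsub_mem_vectorSpan ℝ ⟨A, hA, rfl⟩ ⟨B, hB, rfl⟩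

/-- Exchange: with `C` of size `s - 1` avoiding `i` and `j`, the `s`-sets `C ∪ {i}` and `C ∪ {j}`
have indicator vectors differing by `eᵢ - eⱼ`. -/
lemma single_sub_single_mem {d : ℕ} {S : Finset ℕ} {s : ℕ} (hs : s ∈ S) (h0 : 0 < s)
    (hsd : s < d) (i j : Fin d) :
    Pi.single i (1 : ℝ) - Pi.single j 1 ∈ vectorSpan ℝ (genSet d S) := by
  rcases eq_or_ne i j with rfl | hij
  · simp
  have hc : s - 1 ≤ ((Finset.univ.erase i).erase j).card := by
    rw [Finset.card_erase_of_mem (by simp [hij.symm]), Finset.card_erase_of_mem (by simp)]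
    simp
    omega
  obtain ⟨C, hC, hCc⟩ := Finset.exists_subset_card_eq hc
  have hi : i ∉ C := fun h => by simpa using hC h
  have hj : j ∉ C := fun h => by simpa using hC h
  have h := eVec_sub_mem (S := S) (A := insert i C) (B := insert j C)
    (by rw [Finset.card_insert_of_notMem hi, hCc, Nat.sub_add_cancel h0]; exact hs)
    (by rw [Finset.card_insert_of_notMem hj, hCc, Nat.sub_add_cancel h0]; exact hs)
  simpa [eVec_eq_sum, Finset.sum_insert hi, Finset.sum_insert hj] using h

/-- A level `0 < s < d` together with any second level `t` already gives every direction. -/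
lemma vectorSpan_genSet_eq_top {d : ℕ} {S : Finset ℕ} {s t : ℕ} (hs : s ∈ S) (ht : t ∈ S)
    (h0 : 0 < s) (hsd : s < d) (htd : t ≤ d) (hst : t ≠ s) :
    vectorSpan ℝ (genSet d S) = ⊤ := by
  -- Modulo the span, `e_A` is `|A| • eⱼ`.
  have key : ∀ (A : Finset (Fin d)) (j : Fin d),
      eVec d A - (A.card : ℝ) • Pi.single j (1 : ℝ) ∈ vectorSpan ℝ (genSet d S) := by
    intro A j
    have : eVec d A - (A.card : ℝ) • Pi.single j (1 : ℝ)
        = ∑ i ∈ A, (Pi.single i (1 : ℝ) - Pi.single j 1) := by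
      rw [eVec_eq_sum, Finset.sum_sub_distrib, Finset.sum_const, Nat.cast_smul_eq_nsmul]
    rw [this]
    exact Submodule.sum_mem _ fun i _ => single_sub_single_mem hs h0 hsd i j
  obtain ⟨A, -, hA⟩ := Finset.exists_subset_card_eq (s := (Finset.univ : Finset (Fin d)))
    (n := s) (by simpa using hsd.le)
  obtain ⟨B, -, hB⟩ := Finset.exists_subset_card_eq (s := (Finset.univ : Finset (Fin d)))
    (n := t) (by simpa using htd)
  have hsingle : ∀ j : Fin d, Pi.single j (1 : ℝ) ∈ vectorSpan ℝ (genSet d S) := by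
    intro j
    have hAB := eVec_sub_mem (S := S) (A := A) (B := B) (hA ▸ hs) (hB ▸ ht)
    have h := Submodule.sub_mem _ hAB (Submodule.sub_mem _ (key A j) (key B j))
    have he : eVec d A - eVec d B - (eVec d A - (A.card : ℝ) • Pi.single j (1 : ℝ)
        - (eVec d B - (B.card : ℝ) • Pi.single j (1 : ℝ)))
        = ((s : ℝ) - t) • Pi.single j (1 : ℝ) := by
      rw [hA, hB, sub_smul]
      abel
    rw [he] at h
    refine (Submodule.smul_mem_iff _ ?_).1 h
    rw [sub_ne_zero]
    exact_mod_cast hst.symm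
  rw [eq_top_iff]
  intro x _
  rw [pi_eq_sum_univ' x]
  refine Submodule.sum_mem _ fun i _ => Submodule.smul_mem _ _ ?_
  convert hsingle i using 1

/-- for `d > 1`, `Δ(d,S)` is full-dimensional iff `|S| ≥ 2` and
`S ≠ {0, d}`. -/
theorem proper_iff_Shyp (d : ℕ) (hd : 1 < d) (S : Finset ℕ) (hS : S.Nonempty)
    (hSd : ∀ s ∈ S, s ≤ d) :
    affineSpan ℝ (Shyp d S) = ⊤ ↔ 2 ≤ S.card ∧ S ≠ {0, d} := by
  have hspan : affineSpan ℝ (Shyp d S) = affineSpan ℝ (genSet d S) := affineSpan_convexHull _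
  rw [hspan]
  constructor
  · intro h
    constructor
    · by_contra hlt
      obtain ⟨s, rfl⟩ : ∃ s, S = {s} :=
        Finset.card_eq_one.1 (by have := hS.card_pos; omega)
      have hc := eq_of_affineSpan_eq_top h (∑ i, LinearMap.proj i) s (by
        rintro x ⟨A, hA, rfl⟩
        simpa [sum_eVec] using hA)
      -- The origin forces `s = 0`, the all-ones vector forces `s = d`.
      have h0 := hc 0
      have h1 := hc (fun _ => 1)
      simp at h0 h1
      have h0' : s = 0 := by exact_mod_cast h0.symm
      omega
    · rintro rfl
      -- The coordinates `0` and `1` agree on both vertices, but not on all of `ℝ^d`.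
      let i : Fin d := ⟨0, by omega⟩
      let j : Fin d := ⟨1, hd⟩
      have hij : i ≠ j := by simp [i, j]
      let f : (Fin d → ℝ) →ₗ[ℝ] ℝ :=
        LinearMap.proj (R := ℝ) (φ := fun _ => ℝ) i -
          LinearMap.proj (R := ℝ) (φ := fun _ => ℝ) j
      have hf : ∀ x, f x = x i - x j := fun x => rfl
      have hc := eq_of_affineSpan_eq_top h f 0 (by
        rintro x ⟨A, hA, rfl⟩
        rcases Finset.mem_insert.1 hA with hA | hA
        · rw [Finset.card_eq_zero.1 hA]
          simp [hf, eVec]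
        · have : A = Finset.univ := by
            rw [← Finset.card_eq_iff_eq_univ]
            simpa using hA
          rw [this]
          simp [hf, eVec])
      have h1 := hc (Pi.single i 1)
      simp [hf, hij.symm] at h1
  · rintro ⟨h2, hne⟩
    obtain ⟨s, hs, h0, hsd⟩ : ∃ s ∈ S, 0 < s ∧ s < d := by
      by_contra! hcon
      refine hne (Finset.eq_of_subset_of_card_le ?_ (Finset.card_le_two.trans h2))
      intro s hs
      have h1 := hcon s hs
      have h3 := hSd s hs
      simp only [Finset.mem_insert, Finset.mem_singleton]
      omega
    obtain ⟨t, ht, hts⟩ := Finset.exists_mem_ne (s := S) (by omega) s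
    have htop := vectorSpan_genSet_eq_top hs ht h0 hsd (hSd t ht) hts
    have hnon : (genSet d S).Nonempty := by
      obtain ⟨A, -, hA⟩ := Finset.exists_subset_card_eq (s := (Finset.univ : Finset (Fin d)))
        (n := s) (by simpa using hsd.le)
      exact ⟨_, A, hA ▸ hs, rfl⟩
    exact (AffineSubspace.affineSpan_eq_top_iff_vectorSpan_eq_top_of_nonempty _ _ _ hnon).2 htop
end
end

section
/- For d ≥ 3, the S-hypersimplex Δ(d,{1,d−1}) is affinely isomorphic to the d-dimensional cross-polytope: there exists an invertible affine map T : ℝ^d → ℝ^d with T(Δ(d,{1,d−1})) = conv{±e_1, ±e_2, …, ±e_d}. -/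
/-! The vertices of `Δ(d,{1,d-1})` are the `2d` vectors `e_i` and `1 - e_i`, where `1` is the
all-ones vector. They come in antipodal pairs about the centre `1/2 • 1`, so the affine map
`y ↦ y - (∑ y_j / 2) • 1 + 1/2 • 1` sends `e_i` to `e_i` and `-e_i` to `1 - e_i`. Its linear part
multiplies `1` by `1 - d/2` and is the identity on vectors with coordinate sum zero, so it is
invertible because `d ≠ 2`. Affine maps commute with convex hulls, and the inverse of this map is
the required isomorphism. -/

open Set Pointwise

noncomputable section

/-- The linear automorphism `y ↦ y - (∑ y_j / 2) • 1` of `ℝ^d`, for `d ≠ 2`. -/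
def crossLinear (d : ℕ) (hd : (d : ℝ) ≠ 2) : (Fin d → ℝ) ≃ₗ[ℝ] (Fin d → ℝ) where
  toFun y := fun i => y i - (∑ j, y j) / 2
  invFun x := fun i => x i + (∑ j, x j) / (2 - d)
  map_add' x y := by
    funext i
    simp only [Pi.add_apply, Finset.sum_add_distrib]
    ring
  map_smul' c x := by
    funext i
    simp only [Pi.smul_apply, smul_eq_mul, ← Finset.mul_sum, RingHom.id_apply]
    ring
  left_inv y := by
    funext i
    have h : (2 - d : ℝ) ≠ 0 := sub_ne_zero.mpr hd.symm
    simp only [Finset.sum_sub_distrib, Finset.sum_const, Finset.card_univ, Fintype.card_fin,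
      nsmul_eq_mul]
    field_simp
    ring
  right_inv x := by
    funext i
    have h : (2 - d : ℝ) ≠ 0 := sub_ne_zero.mpr hd.symm
    simp only [Finset.sum_add_distrib, Finset.sum_const, Finset.card_univ, Fintype.card_fin,
      nsmul_eq_mul]
    field_simp
    ring

/-- The affine automorphism `y ↦ y - (∑ y_j / 2) • 1 + 1/2 • 1` of `ℝ^d`, for `d ≠ 2`. -/
def crossAffine (d : ℕ) (hd : (d : ℝ) ≠ 2) : (Fin d → ℝ) ≃ᵃ[ℝ] (Fin d → ℝ) :=
  (crossLinear d hd).toAffineEquiv.trans (AffineEquiv.constVAdd ℝ _ (fun _ => (1 / 2 : ℝ)))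

lemma crossAffine_apply (d : ℕ) (hd : (d : ℝ) ≠ 2) (y : Fin d → ℝ) (i : Fin d) :
    crossAffine d hd y i = 1 / 2 + (y i - (∑ j, y j) / 2) := rfl

lemma crossAffine_single (d : ℕ) (hd : (d : ℝ) ≠ 2) (i : Fin d) :
    crossAffine d hd (Pi.single i 1) = eVec d {i} := by
  funext j
  rw [crossAffine_apply, Finset.sum_pi_single']
  simp [eVec, Pi.single_apply]

lemma crossAffine_neg_single (d : ℕ) (hd : (d : ℝ) ≠ 2) (i : Fin d) :
    crossAffine d hd (-Pi.single i 1) = eVec d {i}ᶜ := by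
  funext j
  rw [crossAffine_apply]
  simp only [Pi.neg_apply, Finset.sum_neg_distrib, Finset.sum_pi_single']
  by_cases h : j = i <;> simp [eVec, h] <;> norm_num

/-- The vertices of the cross-polytope are mapped onto those of `Δ(d,{1,d-1})`. -/
lemma crossAffine_image_vertices (d : ℕ) (hd : 3 ≤ d) (hd' : (d : ℝ) ≠ 2) :
    crossAffine d hd' '' {x : Fin d → ℝ | ∃ i : Fin d,
        x = Pi.single i (1 : ℝ) ∨ x = -Pi.single i (1 : ℝ)} =
      {x | ∃ A : Finset (Fin d), A.card ∈ ({1, d - 1} : Finset ℕ) ∧ x = eVec d A} := by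
  ext x
  constructor
  · rintro ⟨_, ⟨i, rfl | rfl⟩, rfl⟩
    · exact ⟨{i}, by simp, crossAffine_single d hd' i⟩
    · exact ⟨{i}ᶜ, by simp [Finset.card_compl], crossAffine_neg_single d hd' i⟩
  · rintro ⟨A, hA, rfl⟩
    rcases Finset.mem_insert.mp hA with h | h
    · obtain ⟨i, rfl⟩ := Finset.card_eq_one.mp h
      exact ⟨_, ⟨i, Or.inl rfl⟩, crossAffine_single d hd' i⟩
    · have hc : Aᶜ.card = 1 := by
        rw [Finset.card_compl, Fintype.card_fin, Finset.mem_singleton.mp h]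
        omega
      obtain ⟨i, hi⟩ := Finset.card_eq_one.mp hc
      refine ⟨_, ⟨i, Or.inr rfl⟩, ?_⟩
      rw [crossAffine_neg_single, ← hi, compl_compl]

/-- for `d ≥ 3`, `Δ(d,{1,d-1})` is affinely isomorphic to the
`d`-dimensional cross-polytope `conv{±e_1,…,±e_d}`. -/
theorem Shyp_crosspolytope (d : ℕ) (hd : 3 ≤ d) :
    ∃ T : (Fin d → ℝ) ≃ᵃ[ℝ] (Fin d → ℝ),
      T '' Shyp d {1, d - 1} =
        convexHull ℝ {x : Fin d → ℝ | ∃ i : Fin d,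
          x = Pi.single i (1 : ℝ) ∨ x = -Pi.single i (1 : ℝ)} := by
  have hd' : (d : ℝ) ≠ 2 := by
    norm_cast
    omega
  refine ⟨(crossAffine d hd').symm, ?_⟩
  rw [Shyp, ← crossAffine_image_vertices d hd hd']
  have h := (crossAffine d hd').toAffineMap.image_convexHull {x : Fin d → ℝ | ∃ i : Fin d,
    x = Pi.single i (1 : ℝ) ∨ x = -Pi.single i (1 : ℝ)}
  rw [AffineEquiv.coe_toAffineMap] at h
  rw [← h, ← image_comp]
  simp
end
end

section
/- Let d ≥ 3 and let B ⊆ [d] with |B| odd. Then the face of the even halfcube H_d in direction e_B − e_{B^c} equals H_d ∩ {x : ⟨e_B, x⟩ − ⟨e_{B^c}, x⟩ = |B| − 1}, and this face is the convex hull of the d points {e_{B △ {i}} : i ∈ [d]}; moreover these d points are affinely independent, so the face is a (d−1)-dimensional simplex. -/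
open Set Pointwise

noncomputable section

/-!
Write `c = e_B - e_{Bᶜ}`. On a vertex, `⟨c, e_A⟩ = |B| - |A △ B|` (`sum_sign_mul_eVec`). If `|A|` is
even and `|B|` is odd then `|A △ B|` is odd, hence at least `1`, so `⟨c, ·⟩` is at most `|B| - 1` on
the halfcube, with equality at the vertex `e_A` exactly when `A △ B` is a singleton `{i}`, that is
`A = B △ {i}`. The face of a convex hull on which a linear functional attains its maximum is the
convex hull of the generators attaining it (`mem_convexHull_of_eq_max`); this gives the first two
claims. Affine independence holds because `e_{B △ {i}} = e_B - c_i e_i`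
(`eVec_symmDiff_singleton`), so the points are the images of `± e_i` under a translation, and the
dimension of the face follows.
-/

/-- If a linear functional `f` is bounded by `m` on `V`, then every point of the convex hull of `V`
where `f` equals `m` is a convex combination of points of `V` where `f` equals `m`. -/
lemma mem_convexHull_of_eq_max {E : Type*} [AddCommGroup E] [Module ℝ E] (f : E →ₗ[ℝ] ℝ)
    (V : Set E) (m : ℝ) (hV : ∀ v ∈ V, f v ≤ m) {x : E} (hx : x ∈ convexHull ℝ V)
    (hfx : f x = m) : x ∈ convexHull ℝ {v ∈ V | f v = m} := by
  set W := {v ∈ V | f v = m} with hW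
  have hWm : ∀ y ∈ convexHull ℝ W, f y = m := fun y hy =>
    convexHull_min (s := W) (t := {y | f y = m}) (fun v hv => hv.2)
      (convex_hyperplane f.isLinear m) hy
  -- Adjoining the open half-space `f < m` to the convex hull of `W` leaves it convex, and the
  -- resulting set contains `V`.
  have hconv : Convex ℝ ({y | f y < m} ∪ convexHull ℝ W) := by
    rw [convex_iff_forall_pos]
    intro y hy z hz a b ha hb hab
    have hle : ∀ y ∈ {y | f y < m} ∪ convexHull ℝ W, f y ≤ m := by
      rintro y (hy | hy)
      · exact le_of_lt hy
      · exact (hWm y hy).le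
    have hm : a * m + b * m = m := by rw [← add_mul, hab, one_mul]
    have hy' := hle y hy
    have hz' := hle z hz
    by_cases h : f y < m ∨ f z < m
    · left
      simp only [mem_ofPred_eq, map_add, map_smul, smul_eq_mul]
      rcases h with h | h <;> nlinarith
    · push Not at h
      right
      rcases hy with hy | hy
      · exact absurd hy (not_lt.2 h.1)
      rcases hz with hz | hz
      · exact absurd hz (not_lt.2 h.2)
      exact convex_convexHull ℝ W hy hz ha.le hb.le hab
  have hsub : V ⊆ {y | f y < m} ∪ convexHull ℝ W := by
    intro v hv
    rcases (hV v hv).lt_or_eq with h | h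
    · exact Or.inl h
    · exact Or.inr (subset_convexHull ℝ W ⟨hv, h⟩)
  rcases convexHull_min hsub hconv hx with h | h
  · exact absurd hfx (ne_of_lt h)
  · exact h

lemma sum_sign_mul_eVec (d : ℕ) (A B : Finset (Fin d)) :
    ∑ i, (if i ∈ B then (1 : ℝ) else -1) * eVec d A i
      = (B.card : ℝ) - ((symmDiff A B).card : ℝ) := by
  have h : ∀ S : Finset (Fin d), (S.card : ℝ) = ∑ i, if i ∈ S then (1 : ℝ) else 0 := by
    intro S; simp
  rw [h B, h (symmDiff A B), ← Finset.sum_sub_distrib]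
  refine Finset.sum_congr rfl fun i _ => ?_
  by_cases h1 : i ∈ A <;> by_cases h2 : i ∈ B <;> simp [eVec, Finset.mem_symmDiff, h1, h2]

lemma card_symmDiff_add (d : ℕ) (A B : Finset (Fin d)) :
    (symmDiff A B).card + 2 * (A ∩ B).card = A.card + B.card := by
  have h1 := Finset.card_sdiff_add_card_inter A B
  have h2 := Finset.card_sdiff_add_card_inter B A
  have h3 : (symmDiff A B).card = (A \ B).card + (B \ A).card :=
    Finset.card_union_of_disjoint disjoint_sdiff_sdiff
  rw [Finset.inter_comm B A] at h2
  omega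

lemma eVec_symmDiff_singleton (d : ℕ) (B : Finset (Fin d)) (i j : Fin d) :
    eVec d (symmDiff B {i}) j
      = eVec d B j - if j = i then (if j ∈ B then (1 : ℝ) else -1) else 0 := by
  by_cases h1 : j ∈ B <;> by_cases h2 : j = i <;> simp [eVec, Finset.mem_symmDiff, h1, h2] <;>
    simp_all

lemma affineIndependent_eVec_symmDiff (d : ℕ) (B : Finset (Fin d)) :
    AffineIndependent ℝ (fun i : Fin d => eVec d (symmDiff B {i})) := by
  rw [affineIndependent_iff_of_fintype]
  intro w hw hsum j
  rw [Finset.weightedVSub_eq_linear_combination Finset.univ hw] at hsum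
  have hj := congrFun hsum j
  simp only [Finset.sum_apply, Pi.smul_apply, smul_eq_mul, eVec_symmDiff_singleton, mul_sub,
    Finset.sum_sub_distrib, ← Finset.sum_mul, hw, Pi.zero_apply] at hj
  by_cases h : j ∈ B <;> simpa [h] using hj

/-- for `B ⊆ [d]` of odd cardinality, the face of the halfcube
`H_d` in direction `e_B - e_{B^c}` is the slice
`H_d ∩ {x : ⟨e_B,x⟩ - ⟨e_{B^c},x⟩ = |B| - 1}`; it is the convex hull of the `d`
affinely independent points `e_{B △ {i}}`, `i ∈ [d]`, hence a `(d-1)`-simplex. -/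
theorem simplex_facet_halfcube (d : ℕ) (hd : 3 ≤ d) (B : Finset (Fin d))
    (hB : Odd B.card) :
    (faceDir d (halfcube d) (fun i => if i ∈ B then (1 : ℝ) else -1) =
      halfcube d ∩
        {x | ∑ i, (if i ∈ B then (1 : ℝ) else -1) * x i = (B.card : ℝ) - 1}) ∧
    (faceDir d (halfcube d) (fun i => if i ∈ B then (1 : ℝ) else -1) =
      convexHull ℝ {x | ∃ i : Fin d, x = eVec d (symmDiff B {i})}) ∧
    AffineIndependent ℝ (fun i : Fin d => eVec d (symmDiff B {i})) ∧
    Module.finrank ℝ (vectorSpan ℝ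
        (faceDir d (halfcube d) (fun i => if i ∈ B then (1 : ℝ) else -1))) = d - 1 := by
  let f : (Fin d → ℝ) →ₗ[ℝ] ℝ :=
    ∑ i, (if i ∈ B then (1 : ℝ) else -1) • LinearMap.proj i
  have hf : ∀ x, f x = ∑ i, (if i ∈ B then (1 : ℝ) else -1) * x i := by
    intro x
    simp only [f, LinearMap.sum_apply, LinearMap.smul_apply, LinearMap.proj_apply, smul_eq_mul]
  have hfe : ∀ A, f (eVec d A) = (B.card : ℝ) - ((symmDiff A B).card : ℝ) := fun A => by
    rw [hf, sum_sign_mul_eVec]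
  set V : Set (Fin d → ℝ) := {x | ∃ A : Finset (Fin d),
    A.card ∈ (Finset.range (d + 1)).filter (fun s => Even s) ∧ x = eVec d A} with hVdef
  have hH : halfcube d = convexHull ℝ V := rfl
  have hV : ∀ v ∈ V, f v ≤ (B.card : ℝ) - 1 := by
    rintro v ⟨A, hA, rfl⟩
    have hA' := (Finset.mem_filter.1 hA).2
    have hpos : 1 ≤ (symmDiff A B).card := by
      have := card_symmDiff_add d A B
      obtain ⟨a, ha⟩ := hA'
      obtain ⟨b, hb⟩ := hB
      omega
    have : (1 : ℝ) ≤ ((symmDiff A B).card : ℝ) := by exact_mod_cast hpos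
    rw [hfe]
    linarith
  have hle : ∀ y ∈ halfcube d, f y ≤ (B.card : ℝ) - 1 := fun y hy =>
    convexHull_min (t := {y | f y ≤ (B.card : ℝ) - 1}) hV
      (convex_halfSpace_le f.isLinear _) hy
  have hpt : ∀ i, f (eVec d (symmDiff B {i})) = (B.card : ℝ) - 1 := fun i => by
    rw [hfe, symmDiff_comm B, symmDiff_symmDiff_cancel_right, Finset.card_singleton, Nat.cast_one]
  have hmem : ∀ i, eVec d (symmDiff B {i}) ∈ V := by
    intro i
    refine ⟨_, Finset.mem_filter.2 ⟨Finset.mem_range.2 ?_, ?_⟩, rfl⟩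
    · exact Nat.lt_succ_of_le (card_finset_fin_le _)
    · have := card_symmDiff_add d B {i}
      rw [Finset.card_singleton] at this
      obtain ⟨b, hb⟩ := hB
      exact ⟨b + 1 - (B ∩ {i}).card, by omega⟩
  have hVm : {v ∈ V | f v = (B.card : ℝ) - 1} = {x | ∃ i : Fin d, x = eVec d (symmDiff B {i})} := by
    ext x
    constructor
    · rintro ⟨⟨A, -, rfl⟩, hx⟩
      rw [hfe] at hx
      have h1 : ((symmDiff A B).card : ℝ) = 1 := by linarith
      obtain ⟨i, hi⟩ := Finset.card_eq_one.1 (by exact_mod_cast h1)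
      refine ⟨i, ?_⟩
      rw [← hi, symmDiff_comm A, symmDiff_symmDiff_cancel_left]
    · rintro ⟨i, rfl⟩
      exact ⟨hmem i, hpt i⟩
  have h1 : faceDir d (halfcube d) (fun i => if i ∈ B then (1 : ℝ) else -1) =
      halfcube d ∩
        {x | ∑ i, (if i ∈ B then (1 : ℝ) else -1) * x i = (B.card : ℝ) - 1} := by
    ext x
    simp only [faceDir, mem_ofPred_eq, mem_inter_iff, ← hf]
    refine and_congr_right fun hx => ⟨fun h => le_antisymm (hle x hx) ?_, fun h y hy => ?_⟩
    · let i₀ : Fin d := ⟨0, by omega⟩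
      rw [← hpt i₀]
      exact h _ (subset_convexHull ℝ V (hmem i₀))
    · rw [h]
      exact hle y hy
  have h2 : faceDir d (halfcube d) (fun i => if i ∈ B then (1 : ℝ) else -1) =
      convexHull ℝ {x | ∃ i : Fin d, x = eVec d (symmDiff B {i})} := by
    rw [h1, ← hVm]
    apply Subset.antisymm
    · rintro x ⟨hx, hxm⟩
      exact mem_convexHull_of_eq_max f V _ hV hx ((hf x).trans hxm)
    · intro x hx
      refine ⟨convexHull_mono (fun v hv => hv.1) hx, ?_⟩
      have := convexHull_min (t := {y | f y = (B.card : ℝ) - 1}) (fun v hv => hv.2)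
        (convex_hyperplane f.isLinear _) hx
      exact (hf x).symm.trans this
  have h3 := affineIndependent_eVec_symmDiff d B
  refine ⟨h1, h2, h3, ?_⟩
  have hrange : {x | ∃ i : Fin d, x = eVec d (symmDiff B {i})}
      = range (fun i : Fin d => eVec d (symmDiff B {i})) := by
    ext x
    simp only [mem_ofPred_eq, mem_range, eq_comm]
  rw [h2, hrange, ← direction_affineSpan, affineSpan_convexHull, direction_affineSpan]
  exact h3.finrank_vectorSpan (by rw [Fintype.card_fin]; omega)
end
end
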